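/- arXiv:2511.13149 — 2 statements merged into one kernel-verified Lean document; each statement's English description precedes it below -/
import Mathlib

section
/- The common first-order theory of free lattices is undecidable: the set of sentences in the language of posets that are true in every free lattice (i.e., true in the free lattice on X for every nonempty set X) is not decidable. -/
open FirstOrder FirstOrder.Language

attribute [local instance] FirstOrder.Language.orderStructure

universe u u' v v' w w'

/-! ### A fixed computable Gödel encoding of sentences in the language of posets -/

instance (n : ℕ) : Encodable (Language.order.Functions n) := inferInstanceAs (Encodable Empty)

instance : Encodable (Σ i, Language.order.Functions i) := Sigma.encodable

instance : Encodable (Σ n, Language.order.Relations n) :=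
  Encodable.ofEquiv Unit (Equiv.equivPUnit.{1,1} _)

instance : Encodable (Σ n, Language.order.BoundedFormula Empty n) :=
  Encodable.ofLeftInjection
    (fun φ => φ.2.listEncode)
    (fun l => (BoundedFormula.listDecode l)[0]?)
    BoundedFormula.encoding.decode_encode

instance : Encodable Language.order.Sentence :=
  Encodable.ofLeftInjection (fun φ => (⟨0, φ⟩ : Σ n, Language.order.BoundedFormula Empty n))
    (fun ψ => match ψ with | ⟨0, φ⟩ => some φ | _ => none)
    (fun _ => rfl)

/-! ### Free lattices, bipartite posets, join covers -/

/-- `ι : X → F` realizes `F` as a free lattice on the set `X`: every map from `X`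
to a lattice extends uniquely to a lattice homomorphism on `F`. -/
def IsFreeLatticeOn {X : Type u} {F : Type v} [Lattice F] (ι : X → F) : Prop :=
  ∀ (L : Type w) [Lattice L] (f : X → L), ∃! h : LatticeHom F L, ∀ x : X, h (ι x) = f x

/-- A bipartite poset: every element is maximal or minimal. -/
def IsBipartitePoset (Q : Type*) [PartialOrder Q] : Prop :=
  ∀ q : Q, IsMax q ∨ IsMin q

/-- A nice bipartite poset (the maximal elements form the top part `A`, the
non-maximal (hence minimal) elements the bottom part `B`): both parts have at
least three elements, every `a ∈ A` is strictly above at least two elements of `B`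
and fails to be above at least one element of `B`, and dually for `B`. -/
def IsNiceBipartitePoset (Q : Type*) [PartialOrder Q] : Prop :=
  IsBipartitePoset Q ∧
  (∃ a₁ a₂ a₃ : Q, IsMax a₁ ∧ IsMax a₂ ∧ IsMax a₃ ∧ a₁ ≠ a₂ ∧ a₁ ≠ a₃ ∧ a₂ ≠ a₃) ∧
  (∃ b₁ b₂ b₃ : Q, ¬IsMax b₁ ∧ ¬IsMax b₂ ∧ ¬IsMax b₃ ∧ b₁ ≠ b₂ ∧ b₁ ≠ b₃ ∧ b₂ ≠ b₃) ∧
  (∀ a : Q, IsMax a →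
    (∃ b₁ b₂ : Q, ¬IsMax b₁ ∧ ¬IsMax b₂ ∧ b₁ ≠ b₂ ∧ b₁ < a ∧ b₂ < a) ∧
    (∃ b : Q, ¬IsMax b ∧ ¬ b ≤ a)) ∧
  (∀ b : Q, ¬IsMax b →
    (∃ a₁ a₂ : Q, IsMax a₁ ∧ IsMax a₂ ∧ a₁ ≠ a₂ ∧ b < a₁ ∧ b < a₂) ∧
    (∃ a : Q, IsMax a ∧ ¬ b ≤ a))

section JoinCovers

variable {L : Type*} [Lattice L]

/-- `S` is a join cover of `p`: a finite (nonempty) subset with `p ≤ sup S`. -/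
def IsJoinCover (p : L) (S : Finset L) : Prop :=
  ∃ hS : S.Nonempty, p ≤ S.sup' hS id

/-- A join cover is nontrivial if `p ≰ s` for every `s ∈ S`. -/
def IsNontrivialJoinCover (p : L) (S : Finset L) : Prop :=
  IsJoinCover p S ∧ ∀ s ∈ S, ¬ p ≤ s

/-- `S` refines `T` if every element of `S` lies below some element of `T`. -/
def FinsetRefines (S T : Finset L) : Prop :=
  ∀ s ∈ S, ∃ t ∈ T, s ≤ t

/-- A join cover `S` of `p` is minimal if every join cover of `p` refining `S` contains `S`. -/
def IsMinimalJoinCover (p : L) (S : Finset L) : Prop :=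
  IsJoinCover p S ∧ ∀ T : Finset L, IsJoinCover p T → FinsetRefines T S → S ⊆ T

/-- A join cover `S` of `p` is doubly minimal if it is minimal, nontrivial, and any
nontrivial join cover of `p` whose join is below the join of `S` has the same join. -/
def IsDoublyMinimalJoinCover (p : L) (S : Finset L) : Prop :=
  IsMinimalJoinCover p S ∧ IsNontrivialJoinCover p S ∧
  ∀ (T : Finset L) (hT : T.Nonempty) (hS : S.Nonempty), IsNontrivialJoinCover p T →
    T.sup' hT id ≤ S.sup' hS id → T.sup' hT id = S.sup' hS id

/-- `ERel p q` : `p ≠ q` and `q` belongs to some doubly minimal join cover of `p`. -/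
def ERel (p q : L) : Prop :=
  p ≠ q ∧ ∃ S : Finset L, IsDoublyMinimalJoinCover p S ∧ q ∈ S

/-- A subset `Y` of a lattice is independent if no member is below the join, nor above
the meet, of a finite nonempty subset of `Y` not containing it. -/
def IsIndependentSubset (Y : Set L) : Prop :=
  ∀ y ∈ Y, ∀ Z : Finset L, ↑Z ⊆ Y \ {y} → ∀ hZ : Z.Nonempty,
    ¬ y ≤ Z.sup' hZ id ∧ ¬ Z.inf' hZ id ≤ y

end JoinCovers

/-- The standard embedding `ξ` of a finite poset `Q`, included in a set `X` via `j`, into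
a lattice `F` equipped with `ι : X → F`: `ξ q = inf { ι (j q') : q' ∈ Q, q' ≥ q }`. -/
noncomputable def xiMap {Q : Type u} [PartialOrder Q] [Fintype Q] {X : Type u'} (j : Q → X)
    {F : Type v} [Lattice F] (ι : X → F) (q : Q) : F := by
  classical
  exact (Finset.univ.filter fun q' : Q => q ≤ q').inf'
    ⟨q, Finset.mem_filter.mpr ⟨Finset.mem_univ q, le_refl q⟩⟩ fun q' => ι (j q')

/-- The word `w_Q` associated to a finite nice bipartite poset `Q`:
`w_Q = ⋀_{a ∈ max Q} (ξ a ⊔ ⋁ { ξ b : b ∈ min Q, b ≰ a })`. -/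
noncomputable def wQ {Q : Type u} [PartialOrder Q] [Fintype Q] {X : Type u'} (j : Q → X)
    {F : Type v} [Lattice F] (ι : X → F) (hQ : IsNiceBipartitePoset Q) : F := by
  classical
  have hA : (Finset.univ.filter fun a : Q => IsMax a).Nonempty := by
    obtain ⟨a₁, -, -, h₁, -⟩ := hQ.2.1
    exact ⟨a₁, Finset.mem_filter.mpr ⟨Finset.mem_univ _, h₁⟩⟩
  have hB : ∀ a : Q, (Finset.univ.filter fun b : Q => ¬ IsMax b ∧ ¬ b ≤ a).Nonempty := by
    intro a
    by_cases hmax : IsMax a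
    · obtain ⟨b, hb1, hb2⟩ := (hQ.2.2.2.1 a hmax).2
      exact ⟨b, Finset.mem_filter.mpr ⟨Finset.mem_univ _, hb1, hb2⟩⟩
    · have hmin : IsMin a := (hQ.1 a).resolve_left hmax
      obtain ⟨b₁, b₂, b₃, h1, h2, h3, h12, h13, h23⟩ := hQ.2.2.1
      rcases eq_or_ne b₁ a with rfl | hne
      · refine ⟨b₂, Finset.mem_filter.mpr ⟨Finset.mem_univ _, h2, fun hle => ?_⟩⟩
        exact h12 (le_antisymm (hmin hle) hle)
      · refine ⟨b₁, Finset.mem_filter.mpr ⟨Finset.mem_univ _, h1, fun hle => ?_⟩⟩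
        exact hne (le_antisymm hle (hmin hle))
  exact (Finset.univ.filter fun a : Q => IsMax a).inf' hA fun a =>
    xiMap j ι a ⊔
      (Finset.univ.filter fun b : Q => ¬ IsMax b ∧ ¬ b ≤ a).sup' (hB a) (xiMap j ι)

/-- Universally quantify the last `l` (de Bruijn) variables of a bounded formula. -/
def BoundedFormula.allsLast {L : Language} {α : Type*} :
    ∀ {n : ℕ} (l : ℕ), L.BoundedFormula α (n + l) → L.BoundedFormula α n
  | _, 0, ψ => ψ
  | _, l + 1, ψ => BoundedFormula.allsLast l ψ.all

/-- An `∃∀`-sentence in the language of posets: a sentence of the form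
`∃ x₁ … x_k ∀ y₁ … y_l, ψ` with `ψ` quantifier-free. -/
def IsEASentence (φ : Language.order.Sentence) : Prop :=
  ∃ (k l : ℕ) (ψ : Language.order.BoundedFormula Empty (k + l)),
    ψ.IsQF ∧ φ = (BoundedFormula.allsLast l ψ).exs

/-!
The argument interprets computations in free lattices. In a free lattice with at least two
generators, the generators are exactly the doubly prime elements, and the meet of finitely many
joins `g ⊔ g'` of generators lies below a join `x ⊔ y` of generators if and only if one of the
sets `{g, g'}` is contained in `{x, y}`. So every finite graph on the generators is coded by a
single element, and finitely many elements code a finite set of binary trees together with the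
relation between a tree and its children.

A program is run by rewriting configurations, written as binary trees, with a fixed finite list of
rules. For each input there is a sentence denying that some elements code a set of trees that
contains the initial configuration, is closed under the rules, and avoids the output `1`. If the
output is `1`, the sentence is true in every lattice. If it is `0`, the trees of the finite run
refute it in every free lattice on infinitely many generators. Hence a set of sentences that
contains all those true in every lattice, and only ones true in one such free lattice, separates
the inputs with output `1` from those with output `0`; for a suitable program this cannot be done
computably.
-/

/-! ### Free lattices -/

/-- Lattice terms in the generators `G`; the second universe is a free parameter. -/
inductive LatticeTerm (G : Type u) : Type (max u v)
  | of (g : G) : LatticeTerm G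
  | sup (a b : LatticeTerm G) : LatticeTerm G
  | inf (a b : LatticeTerm G) : LatticeTerm G

namespace LatticeTerm

variable {G : Type u} {L : Type*} [Lattice L]

/-- The least preorder on lattice terms for which `sup` and `inf` are joins and meets. -/
inductive Le : LatticeTerm.{u, v} G → LatticeTerm.{u, v} G → Prop
  | refl (a) : Le a a
  | trans {a b c} : Le a b → Le b c → Le a c
  | left_sup (a b) : Le a (sup a b)
  | right_sup (a b) : Le b (sup a b)
  | sup_le {a b c} : Le a c → Le b c → Le (sup a b) c
  | inf_left (a b) : Le (inf a b) a
  | inf_right (a b) : Le (inf a b) b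
  | le_inf {a b c} : Le a b → Le a c → Le a (inf b c)

/-- Two terms are equivalent when they denote the same element of the free lattice. -/
def setoid (G : Type u) : Setoid (LatticeTerm.{u, v} G) where
  r a b := Le a b ∧ Le b a
  iseqv := ⟨fun a => ⟨.refl a, .refl a⟩, fun h => ⟨h.2, h.1⟩,
    fun h h' => ⟨h.1.trans h'.1, h'.2.trans h.2⟩⟩

/-- The value of a term in a lattice, given the values of the generators. -/
def eval (f : G → L) : LatticeTerm.{u, v} G → L
  | of g => f g
  | sup a b => eval f a ⊔ eval f b
  | inf a b => eval f a ⊓ eval f b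

theorem Le.eval_le (f : G → L) {a b : LatticeTerm.{u, v} G} (h : Le a b) :
    a.eval f ≤ b.eval f := by
  induction h with
  | refl => exact le_rfl
  | trans _ _ h₁ h₂ => exact h₁.trans h₂
  | left_sup => exact le_sup_left
  | right_sup => exact le_sup_right
  | sup_le _ _ h₁ h₂ => exact _root_.sup_le h₁ h₂
  | inf_left => exact inf_le_left
  | inf_right => exact inf_le_right
  | le_inf _ _ h₁ h₂ => exact _root_.le_inf h₁ h₂

end LatticeTerm

/-- The free lattice on `G`: lattice terms up to equivalence. -/
def FreeLattice (G : Type u) : Type (max u v) := Quotient (LatticeTerm.setoid.{u, v} G)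

/-- `x` is both join prime and meet prime. -/
def IsDoublyPrime {L : Type*} [Lattice L] (x : L) : Prop := SupPrime x ∧ InfPrime x

namespace FreeLattice

open LatticeTerm

variable {G : Type u} {L : Type*} [Lattice L]

instance : Lattice (FreeLattice.{u, v} G) where
  le a b := Quotient.liftOn₂ a b Le fun _ _ _ _ h h' =>
    propext ⟨fun k => h.2.trans (k.trans h'.1), fun k => h.1.trans (k.trans h'.2)⟩
  sup := Quotient.map₂ LatticeTerm.sup fun _ _ h _ _ h' =>
    ⟨.sup_le (h.1.trans (.left_sup _ _)) (h'.1.trans (.right_sup _ _)),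
      .sup_le (h.2.trans (.left_sup _ _)) (h'.2.trans (.right_sup _ _))⟩
  inf := Quotient.map₂ LatticeTerm.inf fun _ _ h _ _ h' =>
    ⟨.le_inf (.trans (.inf_left _ _) h.1) (.trans (.inf_right _ _) h'.1),
      .le_inf (.trans (.inf_left _ _) h.2) (.trans (.inf_right _ _) h'.2)⟩
  le_refl a := Quotient.inductionOn a Le.refl
  le_trans a b c := Quotient.inductionOn₃ a b c fun _ _ _ => Le.trans
  le_antisymm a b := Quotient.inductionOn₂ a b fun _ _ h h' => Quotient.sound ⟨h, h'⟩
  le_sup_left a b := Quotient.inductionOn₂ a b Le.left_sup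
  le_sup_right a b := Quotient.inductionOn₂ a b Le.right_sup
  sup_le a b c := Quotient.inductionOn₃ a b c fun _ _ _ => Le.sup_le
  inf_le_left a b := Quotient.inductionOn₂ a b Le.inf_left
  inf_le_right a b := Quotient.inductionOn₂ a b Le.inf_right
  le_inf a b c := Quotient.inductionOn₃ a b c fun _ _ _ => Le.le_inf

/-- The generators of the free lattice. -/
def of (g : G) : FreeLattice.{u, v} G := Quotient.mk _ (LatticeTerm.of g)

@[elab_as_elim]
theorem induction_on {P : FreeLattice.{u, v} G → Prop} (t : FreeLattice.{u, v} G)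
    (of : ∀ g, P (of g)) (sup : ∀ a b, P a → P b → P (a ⊔ b))
    (inf : ∀ a b, P a → P b → P (a ⊓ b)) : P t := by
  induction t using Quotient.inductionOn with | h t =>
  induction t with
  | of g => exact of g
  | sup a b ha hb => exact sup _ _ ha hb
  | inf a b ha hb => exact inf _ _ ha hb

/-- The extension of a map on the generators to a lattice homomorphism. -/
def lift (f : G → L) : LatticeHom (FreeLattice.{u, v} G) L where
  toFun t := Quotient.liftOn t (LatticeTerm.eval f) fun _ _ h =>
    le_antisymm (h.1.eval_le f) (h.2.eval_le f)
  map_sup' a b := Quotient.inductionOn₂ a b fun _ _ => rfl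
  map_inf' a b := Quotient.inductionOn₂ a b fun _ _ => rfl

@[simp]
theorem lift_of (f : G → L) (g : G) : lift f (of.{u, v} g) = f g := rfl

theorem isFreeLatticeOn {X : Type u'} (e : X ≃ G) :
    IsFreeLatticeOn.{u', max u v, w} fun x => of.{u, v} (e x) := by
  intro L _ f
  refine ⟨lift (f ∘ e.symm), fun x => by simp, fun h hh => LatticeHom.ext fun t => ?_⟩
  induction t using induction_on with
  | of g => simpa using hh (e.symm g)
  | sup a b ha hb => rw [map_sup, map_sup, ha, hb]
  | inf a b ha hb => rw [map_inf, map_inf, ha, hb]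

theorem of_le_iff_lift {g : G} {t : FreeLattice.{u, v} G} :
    of g ≤ t ↔ lift (fun x => x = g) t := by
  refine ⟨fun h => OrderHomClass.mono (lift fun x => x = g) h rfl, fun h => ?_⟩
  induction t using induction_on with
  | of x => exact h ▸ le_rfl
  | sup a b ha hb =>
    rw [map_sup] at h
    exact h.elim (fun h => (ha h).trans le_sup_left) fun h => (hb h).trans le_sup_right
  | inf a b ha hb =>
    rw [map_inf] at h
    exact le_inf (ha h.1) (hb h.2)

theorem le_of_iff_lift {g : G} {t : FreeLattice.{u, v} G} :
    t ≤ of g ↔ ¬ lift (fun x => x ≠ g) t := by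
  refine ⟨fun h h' => OrderHomClass.mono (lift fun x => x ≠ g) h h' rfl, fun h => ?_⟩
  induction t using induction_on with
  | of x => exact not_not.1 h ▸ le_rfl
  | sup a b ha hb =>
    rw [map_sup] at h
    exact sup_le (ha fun h' => h (.inl h')) (hb fun h' => h (.inr h'))
  | inf a b ha hb =>
    rw [map_inf] at h
    exact (not_and_or.1 h).elim (fun h => inf_le_left.trans (ha h)) fun h =>
      inf_le_right.trans (hb h)

theorem of_le_of {g g' : G} : (of g : FreeLattice.{u, v} G) ≤ of g' ↔ g = g' :=
  of_le_iff_lift.trans eq_comm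

theorem of_injective : Function.Injective (of : G → FreeLattice.{u, v} G) :=
  fun _ _ h => of_le_of.1 h.le

theorem isDoublyPrime_of [Nontrivial G] (g : G) : IsDoublyPrime (of g : FreeLattice.{u, v} G) := by
  obtain ⟨g', hg'⟩ := exists_ne g
  refine ⟨⟨fun h => ?_, fun a b h => ?_⟩, ⟨fun h => ?_, fun a b h => ?_⟩⟩
  · exact hg' (of_le_of.1 (le_inf_iff.1 (h (inf_le_right : of g' ⊓ of g ≤ of g))).1).symm
  · rw [of_le_iff_lift, map_sup] at h
    rwa [of_le_iff_lift, of_le_iff_lift]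
  · exact hg' (of_le_of.1 (sup_le_iff.1 (h (le_sup_right : of g ≤ of g' ⊔ of g))).1)
  · rw [le_of_iff_lift, map_inf] at h
    rw [le_of_iff_lift, le_of_iff_lift]
    exact not_and_or.1 h

theorem isDoublyPrime_iff [Nontrivial G] {x : FreeLattice.{u, v} G} :
    IsDoublyPrime x ↔ ∃ g, x = of g := by
  refine ⟨fun h => ?_, fun ⟨g, hg⟩ => hg ▸ isDoublyPrime_of g⟩
  induction x using induction_on with
  | of g => exact ⟨g, rfl⟩
  | sup a b ha hb =>
    rcases h.1.supIrred.2 rfl with h' | h'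
    · rw [← h'] at h ⊢
      exact ha h
    · rw [← h'] at h ⊢
      exact hb h
  | inf a b ha hb =>
    rcases h.2.infIrred.2 rfl with h' | h'
    · rw [← h'] at h ⊢
      exact ha h
    · rw [← h'] at h ⊢
      exact hb h

theorem of_le_sup'_of_iff {ι : Type*} {S : Finset ι} (hS : S.Nonempty) {f : ι → G} {x : G} :
    (of x : FreeLattice.{u, v} G) ≤ S.sup' hS (fun s => of (f s)) ↔ ∃ s ∈ S, f s = x := by
  refine ⟨fun h => ?_, fun ⟨s, hs, h⟩ => h ▸ Finset.le_sup' (fun s => of (f s)) hs⟩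
  by_contra! hne
  rw [of_le_iff_lift, map_finset_sup'] at h
  exact (Finset.sup'_le _ _ fun s hs => hne s hs : _ ≤ False) h

/-- A single element thus codes a finite graph on the generators. -/
theorem inf'_of_sup_of_le_iff {ι : Type*} {S : Finset ι} (hS : S.Nonempty) {f f' : ι → G}
    {x y : G} :
    S.inf' hS (fun s => of (f s) ⊔ of (f' s)) ≤ (of x ⊔ of y : FreeLattice.{u, v} G) ↔
      ∃ s ∈ S, (f s = x ∨ f s = y) ∧ (f' s = x ∨ f' s = y) := by
  constructor
  · intro h
    by_contra! hne
    have hle := OrderHomClass.mono (lift fun g => g ≠ x ∧ g ≠ y) h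
    rw [map_finset_inf', map_sup, lift_of, lift_of] at hle
    have htop : True ≤
        S.inf' hS (lift (fun g => g ≠ x ∧ g ≠ y) ∘ fun s => of (f s) ⊔ of (f' s)) := by
      refine Finset.le_inf' _ _ fun s hs _ => ?_
      have := hne s hs
      simp only [Function.comp_apply, map_sup, lift_of, sup_Prop_eq]
      tauto
    exact (hle (htop trivial)).elim (fun h => h.1 rfl) fun h => h.2 rfl
  · rintro ⟨s, hs, h, h'⟩
    refine (Finset.inf'_le _ hs).trans (sup_le ?_ ?_)
    · rcases h with h | h <;> simp [h]
    · rcases h' with h | h <;> simp [h]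

end FreeLattice

/-! ### An interpreter as a rewriting system -/

/-- Binary terms: binary trees, some of whose leaves are variables in `α`. -/
inductive BinTerm (α : Type)
  | var (a : α) : BinTerm α
  | leaf : BinTerm α
  | node (s t : BinTerm α) : BinTerm α
  deriving Inhabited, Countable

/-- Binary trees, as binary terms without variables. -/
abbrev BinTree := BinTerm Empty

namespace BinTerm

open Turing.ToPartrec (Code Cont Cfg)

variable {α β : Type}

/-- Simultaneous substitution of terms for the variables of a term. -/
def subst (σ : α → BinTerm β) : BinTerm α → BinTerm β
  | var a => σ a
  | leaf => leaf
  | node s t => node (s.subst σ) (t.subst σ)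

/-- The variables of a term. -/
def vars : BinTerm α → List α
  | var a => [a]
  | leaf => []
  | node s t => s.vars ++ t.vars

/-- A sufficient condition for two terms to have no common instance. -/
def clash : BinTerm α → BinTerm α → Bool
  | leaf, node _ _ => true
  | node _ _, leaf => true
  | node s t, node s' t' => clash s s' || clash t t'
  | _, _ => false

theorem subst_ne_of_clash {s t : BinTerm α} (h : s.clash t = true) (σ τ : α → BinTerm β) :
    s.subst σ ≠ t.subst τ := by
  induction s generalizing t with
  | var a => simp [clash] at h
  | leaf => cases t <;> simp_all [clash, subst]
  | node a b ha hb =>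
    cases t with
    | var i => simp [clash] at h
    | leaf => simp [subst]
    | node a' b' =>
      rw [clash, Bool.or_eq_true] at h
      simp only [subst, ne_eq, node.injEq, not_and_or]
      exact h.imp ha hb

theorem subst_eq_subst_iff {t : BinTerm α} {σ τ : α → BinTerm β} :
    t.subst σ = t.subst τ ↔ ∀ a ∈ t.vars, σ a = τ a := by
  induction t with
  | var a => simp [subst, vars]
  | leaf => simp [subst, vars]
  | node s t hs ht =>
    simp only [subst, vars, node.injEq, hs, ht, List.mem_append, or_imp, forall_and]

/-- The unary numeral `n`. -/
def num : ℕ → BinTerm α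
  | 0 => leaf
  | n + 1 => node leaf (num n)

/-- The coding of lists of natural numbers by trees. -/
def list : List ℕ → BinTerm α
  | [] => leaf
  | n :: l => node (num n) (list l)

/-- The coding of elements of inductive types by trees: the `i`-th constructor, applied to
arguments that are already coded. -/
def constr (i : ℕ) (args : List (BinTerm α)) : BinTerm α := node (num i) (args.foldr node leaf)

/-- The coding of programs by trees. -/
def code : Code → BinTerm α
  | .zero' => constr 0 []
  | .succ => constr 1 []
  | .tail => constr 2 []
  | .cons f g => constr 3 [code f, code g]
  | .comp f g => constr 4 [code f, code g]
  | .case f g => constr 5 [code f, code g]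
  | .fix f => constr 6 [code f]

/-- The coding of continuations by trees. -/
def cont : Cont → BinTerm α
  | .halt => constr 0 []
  | .cons₁ g v k => constr 1 [code g, list v, cont k]
  | .cons₂ w k => constr 2 [list w, cont k]
  | .comp f k => constr 3 [code f, cont k]
  | .fix f k => constr 4 [code f, cont k]

/-- The configuration about to run the program `c` on `v`, with continuation `k`. -/
def evalCfg (c k v : BinTerm α) : BinTerm α := constr 0 [c, k, v]

/-- The configuration returning the value `v` to the continuation `k`. -/
def retCfg (k v : BinTerm α) : BinTerm α := constr 1 [k, v]

/-- The coding of configurations by trees; a halted configuration is identified with one that is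
about to return to the continuation `halt`. -/
def cfg : Cfg → BinTerm α
  | .halt v => retCfg (cont .halt) (list v)
  | .ret k v => retCfg (cont k) (list v)

theorem subst_var (t : BinTerm α) : t.subst var = t := by
  induction t <;> simp_all [subst]

@[simp]
theorem subst_num (σ : α → BinTerm β) (n : ℕ) : (num n).subst σ = num n := by
  induction n with
  | zero => rfl
  | succ n ih => rw [num, num, subst, subst, ih]

@[simp]
theorem subst_constr (σ : α → BinTerm β) (i : ℕ) (args : List (BinTerm α)) :
    (constr i args).subst σ = constr i (args.map (subst σ)) := by
  rw [constr, constr, subst, subst_num]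
  congr 1
  induction args with
  | nil => rfl
  | cons t args ih => rw [List.foldr_cons, subst, ih, List.map_cons, List.foldr_cons]

@[simp]
theorem subst_code (σ : α → BinTerm β) (c : Code) : (code c).subst σ = code c := by
  induction c <;> simp_all [code]

end BinTerm

/-- The variables of the rewriting rules: programs `f` and `g`, a continuation `k`, lists `v` and
`w`, and a number `n`. -/
inductive RuleVar
  | f | g | k | v | w | n
  deriving DecidableEq

instance : Fintype RuleVar := .ofList [.f, .g, .k, .v, .w, .n] (by rintro ⟨⟩ <;> decide)

/-- The names of the rewriting rules: one for each case of the evaluation of a program, and then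
one for each case of the return to a continuation. -/
inductive Rule
  | zero' | succNil | succCons | tailNil | tailCons | cons | comp | caseNil | caseZero | caseSucc
  | fix | retCons₁ | retCons₂Nil | retCons₂Cons | retComp | retFixNil | retFixZero | retFixSucc
  deriving DecidableEq

instance : Fintype Rule :=
  .ofList [.zero', .succNil, .succCons, .tailNil, .tailCons, .cons, .comp, .caseNil, .caseZero,
    .caseSucc, .fix, .retCons₁, .retCons₂Nil, .retCons₂Cons, .retComp, .retFixNil, .retFixZero,
    .retFixSucc] (by rintro ⟨⟩ <;> decide)

namespace Rule

open BinTerm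

/-- The two sides of a rewriting rule. -/
def sides : Rule → BinTerm RuleVar × BinTerm RuleVar :=
  let f : BinTerm RuleVar := .var .f
  let g : BinTerm RuleVar := .var .g
  let k : BinTerm RuleVar := .var .k
  let v : BinTerm RuleVar := .var .v
  let w : BinTerm RuleVar := .var .w
  let n : BinTerm RuleVar := .var .n
  fun
  | zero' => (evalCfg (constr 0 []) k v, retCfg k (node leaf v))
  | succNil => (evalCfg (constr 1 []) k leaf, retCfg k (node (node leaf leaf) leaf))
  | succCons => (evalCfg (constr 1 []) k (node n v), retCfg k (node (node leaf n) leaf))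
  | tailNil => (evalCfg (constr 2 []) k leaf, retCfg k leaf)
  | tailCons => (evalCfg (constr 2 []) k (node n v), retCfg k v)
  | cons => (evalCfg (constr 3 [f, g]) k v, evalCfg f (constr 1 [g, v, k]) v)
  | comp => (evalCfg (constr 4 [f, g]) k v, evalCfg g (constr 3 [f, k]) v)
  | caseNil => (evalCfg (constr 5 [f, g]) k leaf, evalCfg f k leaf)
  | caseZero => (evalCfg (constr 5 [f, g]) k (node leaf v), evalCfg f k v)
  | caseSucc => (evalCfg (constr 5 [f, g]) k (node (node leaf n) v), evalCfg g k (node n v))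
  | fix => (evalCfg (constr 6 [f]) k v, evalCfg f (constr 4 [f, k]) v)
  | retCons₁ => (retCfg (constr 1 [g, v, k]) w, evalCfg g (constr 2 [w, k]) v)
  | retCons₂Nil => (retCfg (constr 2 [leaf, k]) v, retCfg k (node leaf v))
  | retCons₂Cons => (retCfg (constr 2 [node n w, k]) v, retCfg k (node n v))
  | retComp => (retCfg (constr 3 [f, k]) v, evalCfg f k v)
  | retFixNil => (retCfg (constr 4 [f, k]) leaf, retCfg k leaf)
  | retFixZero => (retCfg (constr 4 [f, k]) (node leaf v), retCfg k v)
  | retFixSucc => (retCfg (constr 4 [f, k]) (node (node leaf n) v), evalCfg f (constr 4 [f, k]) v)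

/-- The left-hand side of a rewriting rule. -/
def lhs (r : Rule) : BinTerm RuleVar := r.sides.1

/-- The right-hand side of a rewriting rule. -/
def rhs (r : Rule) : BinTerm RuleVar := r.sides.2

theorem clash_lhs_of_ne : ∀ {r r' : Rule}, r ≠ r' → r.lhs.clash r'.lhs = true := by
  decide

theorem mem_vars_lhs_of_mem_vars_rhs : ∀ {r : Rule}, ∀ x ∈ r.rhs.vars, x ∈ r.lhs.vars := by
  decide

end Rule

namespace BinTree

open BinTerm Turing.ToPartrec Relation

/-- One rewriting step, at the root of a tree. -/
inductive Step : BinTree → BinTree → Prop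
  | of_rule (r : Rule) (σ : RuleVar → BinTree) : Step (r.lhs.subst σ) (r.rhs.subst σ)

theorem Step.rightUnique : Relator.RightUnique Step := by
  rintro _ t₁ t₂ ⟨r, σ⟩ h₂
  generalize hs : r.lhs.subst σ = s at h₂
  obtain ⟨r', τ⟩ := h₂
  obtain rfl : r = r' := by
    by_contra hne
    exact subst_ne_of_clash (Rule.clash_lhs_of_ne hne) σ τ hs
  rw [subst_eq_subst_iff] at hs ⊢
  exact fun x hx => hs x (Rule.mem_vars_lhs_of_mem_vars_rhs x hx)

theorem not_step_cfg_halt (v : List ℕ) (t : BinTree) : ¬ Step (cfg (.halt v)) t := by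
  intro h
  generalize hs : cfg (.halt v) = s at h
  obtain ⟨r, σ⟩ := h
  have hclash : ∀ r : Rule, (retCfg (constr 0 []) (var .v)).clash r.lhs = true := by decide
  refine subst_ne_of_clash (hclash r) (fun _ => list v) σ (.trans ?_ hs)
  simp [retCfg, cfg, cont, subst]

theorem reflTransGen_step_stepNormal (c : Code) (k : Cont) (v : List ℕ) :
    ReflTransGen Step (evalCfg (code c) (cont k) (list v)) (cfg (stepNormal c k v)) := by
  induction c generalizing k v with
  | zero' => exact .single (.of_rule .zero' fun | .k => cont k | _ => list v)
  | succ =>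
    rcases v with _ | ⟨n, v⟩
    · exact .single (.of_rule .succNil fun _ => cont k)
    · exact .single (.of_rule .succCons fun | .k => cont k | .n => num n | _ => list v)
  | tail =>
    rcases v with _ | ⟨n, v⟩
    · exact .single (.of_rule .tailNil fun _ => cont k)
    · exact .single (.of_rule .tailCons fun | .k => cont k | .n => num n | _ => list v)
  | cons f g hf _ =>
    exact .head (.of_rule .cons fun | .f => code f | .g => code g | .k => cont k | _ => list v)
      (hf (.cons₁ g v k) v)
  | comp f g _ hg =>
    exact .head (.of_rule .comp fun | .f => code f | .g => code g | .k => cont k | _ => list v)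
      (hg (.comp f k) v)
  | case f g hf hg =>
    rcases v with _ | ⟨_ | n, v⟩
    · exact .head (.of_rule .caseNil fun | .f => code f | .g => code g | _ => cont k) (hf k [])
    · exact .head (.of_rule .caseZero fun
        | .f => code f | .g => code g | .k => cont k | _ => list v) (hf k v)
    · exact .head (.of_rule .caseSucc fun
        | .f => code f | .g => code g | .k => cont k | .n => num n | _ => list v) (hg k (n :: v))
  | fix f hf =>
    exact .head (.of_rule .fix fun | .f => code f | .k => cont k | _ => list v) (hf (.fix f k) v)

theorem reflTransGen_step_stepRet (k : Cont) (v : List ℕ) :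
    ReflTransGen Step (retCfg (cont k) (list v)) (cfg (stepRet k v)) := by
  induction k generalizing v with
  | halt => exact .refl
  | cons₁ g v' k _ =>
    exact .head (.of_rule .retCons₁ fun | .g => code g | .v => list v' | .k => cont k | _ => list v)
      (reflTransGen_step_stepNormal g (.cons₂ v k) v')
  | cons₂ w k hk =>
    rcases w with _ | ⟨n, w⟩
    · exact .head (.of_rule .retCons₂Nil fun | .k => cont k | _ => list v) (hk (0 :: v))
    · exact .head (.of_rule .retCons₂Cons fun
        | .n => num n | .w => list w | .k => cont k | _ => list v) (hk (n :: v))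
  | comp f k _ =>
    exact .head (.of_rule .retComp fun | .f => code f | .k => cont k | _ => list v)
      (reflTransGen_step_stepNormal f k v)
  | fix f k hk =>
    rcases v with _ | ⟨_ | n, v⟩
    · exact .head (.of_rule .retFixNil fun | .f => code f | _ => cont k) (hk [])
    · exact .head (.of_rule .retFixZero fun | .f => code f | .k => cont k | _ => list v) (hk v)
    · exact .head (.of_rule .retFixSucc fun
        | .f => code f | .k => cont k | .n => num n | _ => list v)
        (reflTransGen_step_stepNormal f (.fix f k) v)

theorem reflTransGen_step_of_mem_eval {c : Code} {v v' : List ℕ} (h : v' ∈ c.eval v) :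
    ReflTransGen Step (evalCfg (code c) (cont .halt) (list v)) (cfg (.halt v')) := by
  refine (reflTransGen_step_stepNormal c .halt v).trans ?_
  have hmem : Cfg.halt v' ∈ StateTransition.eval step (stepNormal c .halt v) := by
    rw [stepNormal_eval]
    exact Part.mem_map _ h
  refine (StateTransition.mem_eval.1 hmem).1.lift' cfg fun s t hst => ?_
  cases s with
  | halt v => cases hst
  | ret k v => cases hst; exact reflTransGen_step_stepRet k v

end BinTree

theorem exists_finset_closed_of_reflTransGen {α : Type*} {r : α → α → Prop}
    (hr : Relator.RightUnique r) {a b : α} (h : Relation.ReflTransGen r a b)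
    (hb : ∀ c, ¬ r b c) :
    ∃ S : Finset α, a ∈ S ∧ (∀ s ∈ S, ∀ t, r s t → t ∈ S) ∧ ∀ s ∈ S, s = b ∨ ∃ t, r s t := by
  classical
  induction h using Relation.ReflTransGen.head_induction_on with
  | refl => exact ⟨{b}, by simp, by simp [hb], by simp⟩
  | @head a c hac _ ih =>
    obtain ⟨S, hc, hS, hS'⟩ := ih
    refine ⟨insert a S, Finset.mem_insert_self a S, ?_, ?_⟩
    · rintro s hs t hst
      rcases Finset.mem_insert.1 hs with rfl | hs
      · exact Finset.mem_insert_of_mem (hr hst hac ▸ hc)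
      · exact Finset.mem_insert_of_mem (hS s hs t hst)
    · exact Finset.forall_mem_insert .. |>.2 ⟨.inr ⟨c, hac⟩, hS'⟩

theorem exists_code_computably_inseparable :
    ∃ c : Turing.ToPartrec.Code, ∀ h : ℕ → Bool, Computable h →
      ∃ n, [bif h n then 0 else 1] ∈ c.eval [n] := by
  have huniv : Partrec fun n : ℕ => (Denumerable.ofNat Nat.Partrec.Code n).eval n :=
    Nat.Partrec.Code.eval_part.comp (Computable.ofNat _) Computable.id
  obtain ⟨c, hc⟩ := Turing.ToPartrec.Code.exists_code (Nat.Partrec'.part_iff₁.2 huniv)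
  refine ⟨c, fun h hh => ?_⟩
  have hdiag : Computable fun n => bif h n then 0 else 1 :=
    Computable.cond hh (Computable.const 0) (Computable.const 1)
  obtain ⟨e, he⟩ := Nat.Partrec.Code.exists_code.1 (Partrec.nat_iff.1 hdiag)
  refine ⟨Encodable.encode e, ?_⟩
  have heval : c.eval [Encodable.encode e] = pure <$>
      (Denumerable.ofNat Nat.Partrec.Code (Encodable.encode e)).eval (Encodable.encode e) :=
    hc ⟨[Encodable.encode e], rfl⟩
  rw [heval, Denumerable.ofNat_encode, he]
  exact Part.mem_map _ (Part.mem_some _)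

/-! ### Finite sets of trees coded by elements of a lattice -/

section Interpretation

open BinTerm BinTree Turing.ToPartrec Relation

/-- The names of the parameters by which a set of trees, the *nodes*, and a subset of it, the
*reached* nodes, are coded in a lattice. -/
inductive Param
  | leaf | nodes | edge | left | right | reached
  deriving DecidableEq

instance : Fintype Param :=
  .ofList [.leaf, .nodes, .edge, .left, .right, .reached] (by rintro ⟨⟩ <;> decide)

variable {M : Type*} [Lattice M] {α β : Type}

/-- In the structure coded by `p`, the element `x` is a node. -/
def IsNode (p : Param → M) (x : M) : Prop :=
  IsDoublyPrime x ∧ x ≤ p .nodes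

/-- In the structure coded by `p`, the node `z` has the children `a` and `b`. The ternary relation
is coded by three binary ones, which link an auxiliary doubly prime element to `z`, `a` and `b`. -/
def HasChildren (p : Param → M) (z a b : M) : Prop :=
  ∃ e, IsDoublyPrime e ∧ p .edge ≤ z ⊔ e ∧ p .left ≤ e ⊔ a ∧ p .right ≤ e ⊔ b

/-- In the structure coded by `p`, the node `z` matches a term whose variables take the values
`xs`. -/
def Matches (p : Param → M) (xs : α → M) : BinTerm α → M → Prop
  | .var i, z => IsNode p z ∧ z = xs i
  | .leaf, z => IsNode p z ∧ z = p .leaf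
  | .node s t, z =>
    IsNode p z ∧ ∃ a b, HasChildren p z a b ∧ Matches p xs s a ∧ Matches p xs t b

/-- In the structure coded by `p`, the node `z` represents a tree. -/
def Represents (p : Param → M) (t : BinTree) (z : M) : Prop := Matches p Empty.elim t z

/-- In the structure coded by `p`, a node is determined by its children. -/
def ChildrenDetermine (p : Param → M) : Prop :=
  ∀ z y a b, IsNode p z → IsNode p y → IsNode p a → IsNode p b →
    HasChildren p z a b → HasChildren p y a b → z = y

/-- In the structure coded by `p`, the reached nodes are closed under a rewriting rule. -/
def ClosedUnderRule (p : Param → M) (r : Rule) : Prop :=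
  ∀ (xs : RuleVar → M) (z), z ≤ p .reached → Matches p xs r.lhs z →
    ∃ y, y ≤ p .reached ∧ Matches p xs r.rhs y

/-- In the structure coded by `p`, no reached node represents the configuration that has halted
with output `1`. -/
def AvoidsOutputOne (p : Param → M) : Prop :=
  ∀ z, z ≤ p .reached → ¬ Represents p (cfg (.halt [1])) z

/-- The configuration about to run `c` on a number, which is the variable of the term. -/
def initCfg (c : Code) : BinTerm Unit := evalCfg (code c) (cont .halt) (node (.var ()) leaf)

/-- The reached nodes of the structure coded by `p` contain the initial configuration of `c` on
the number represented by `z`, are closed under the rewriting rules, and avoid the output `1`. -/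
def IsSafeRun (c : Code) (p : Param → M) (z : M) : Prop :=
  ChildrenDetermine p ∧ (∀ r, ClosedUnderRule p r) ∧ AvoidsOutputOne p ∧
    ∃ y, y ≤ p .reached ∧ Matches p (fun _ => z) (initCfg c) y

/-- In the structure coded by `p`, the node `y` represents the successor of the number represented
by `z`. -/
def IsSucc (p : Param → M) (z y : M) : Prop :=
  Matches p (fun _ : Unit => z) (node leaf (.var ())) y

/-- Some parameters in `M` code a safe run of `c` on the input `n`. -/
def HasSafeRun (c : Code) (n : ℕ) (M : Type*) [Lattice M] : Prop :=
  ∃ (p : Param → M) (z : ℕ → M),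
    Represents p leaf (z 0) ∧ (∀ i < n, IsSucc p (z i) (z (i + 1))) ∧ IsSafeRun c p (z n)

variable {p : Param → M} {xs : α → M} {ys : β → M} {t : BinTerm α} {σ : α → BinTerm β} {z z' : M}

theorem Matches.isNode (h : Matches p xs t z) : IsNode p z := by
  cases t <;> exact h.1

theorem Matches.eq (hp : ChildrenDetermine p) (h : Matches p xs t z) (h' : Matches p xs t z') :
    z = z' := by
  induction t generalizing z z' with
  | var i => exact h.2.trans h'.2.symm
  | leaf => exact h.2.trans h'.2.symm
  | node s t hs ht =>
    obtain ⟨hz, a, b, hab, ha, hb⟩ := h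
    obtain ⟨hz', a', b', hab', ha', hb'⟩ := h'
    obtain rfl := hs ha ha'
    obtain rfl := ht hb hb'
    exact hp z z' a b hz hz' ha.isNode hb.isNode hab hab'

theorem Matches.subst (hσ : ∀ i ∈ t.vars, Matches p ys (σ i) (xs i)) (h : Matches p xs t z) :
    Matches p ys (t.subst σ) z := by
  induction t generalizing z with
  | var i => exact h.2 ▸ hσ i (by simp [vars])
  | leaf => exact h
  | node s t hs ht =>
    simp only [vars, List.mem_append, or_imp, forall_and] at hσ
    obtain ⟨hz, a, b, hab, ha, hb⟩ := h
    exact ⟨hz, a, b, hab, hs hσ.1 ha, ht hσ.2 hb⟩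

theorem Matches.exists_of_mem_vars (h : Matches p ys (t.subst σ) z) {i : α} (hi : i ∈ t.vars) :
    ∃ x, Matches p ys (σ i) x := by
  induction t generalizing z with
  | var j => exact ⟨z, List.mem_singleton.1 hi ▸ h⟩
  | leaf => cases hi
  | node s t hs ht =>
    obtain ⟨-, a, b, -, ha, hb⟩ := h
    exact (List.mem_append.1 hi).elim (hs ha) (ht hb)

theorem Matches.isNode_of_mem_vars (h : Matches p xs t z) {i : α} (hi : i ∈ t.vars) :
    IsNode p (xs i) := by
  obtain ⟨x, hx, rfl⟩ := Matches.exists_of_mem_vars (t.subst_var.symm ▸ h) hi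
  exact hx

theorem Matches.of_subst (hp : ChildrenDetermine p) (hσ : ∀ i ∈ t.vars, Matches p ys (σ i) (xs i))
    (h : Matches p ys (t.subst σ) z) : Matches p xs t z := by
  induction t generalizing z with
  | var i => exact ⟨h.isNode, h.eq hp (hσ i (by simp [vars]))⟩
  | leaf => exact h
  | node s t hs ht =>
    simp only [vars, List.mem_append, or_imp, forall_and] at hσ
    obtain ⟨hz, a, b, hab, ha, hb⟩ := h
    exact ⟨hz, a, b, hab, hs hσ.1 ha, ht hσ.2 hb⟩

theorem ClosedUnderRule.exists_represents {r : Rule} (hr : ClosedUnderRule p r)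
    (hp : ChildrenDetermine p) {σ : RuleVar → BinTree} (hz : z ≤ p .reached)
    (h : Represents p (r.lhs.subst σ) z) :
    ∃ y, y ≤ p .reached ∧ Represents p (r.rhs.subst σ) y := by
  have : Nonempty M := ⟨z⟩
  have hvars : ∀ i ∈ r.lhs.vars, ∃ x, Represents p (σ i) x := fun i hi => h.exists_of_mem_vars hi
  choose! xs hxs using hvars
  obtain ⟨y, hy, hm⟩ := hr xs z hz (h.of_subst hp hxs)
  exact ⟨y, hy, hm.subst fun i hi => hxs i (Rule.mem_vars_lhs_of_mem_vars_rhs i hi)⟩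

theorem exists_represents_of_reflTransGen_step (hp : ChildrenDetermine p)
    (hr : ∀ r, ClosedUnderRule p r) {t t' : BinTree} (h : ReflTransGen Step t t')
    (ht : ∃ z, z ≤ p .reached ∧ Represents p t z) : ∃ z, z ≤ p .reached ∧ Represents p t' z := by
  induction h with
  | refl => exact ht
  | tail _ hs ih =>
    obtain ⟨r, σ⟩ := hs
    obtain ⟨z, hz, h⟩ := ih
    exact (hr r).exists_represents hp hz h

theorem represents_num {z : ℕ → M} {n : ℕ} (h₀ : Represents p leaf (z 0))
    (hsucc : ∀ i < n, IsSucc p (z i) (z (i + 1))) : Represents p (num n) (z n) := by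
  induction n with
  | zero => exact h₀
  | succ n ih =>
    have hn : Represents p (num n) (z n) := ih fun i hi => hsucc i (by lia)
    exact (hsucc n n.lt_succ_self).subst (σ := fun _ => num n) fun _ _ => hn

theorem not_hasSafeRun_of_one_mem_eval {c : Code} {n : ℕ} (h : [1] ∈ c.eval [n]) :
    ¬ HasSafeRun c n M := by
  rintro ⟨p, z, h₀, hsucc, hp, hr, h_avoid, y, hy, hinit⟩
  have hnum : Represents p (num n) (z n) := represents_num h₀ hsucc
  have hstart : Represents p (evalCfg (code c) (cont .halt) (list [n])) y := by
    simpa [initCfg, evalCfg, BinTerm.subst, cont, list, Represents]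
      using hinit.subst (σ := fun _ => num n) fun _ _ => hnum
  obtain ⟨z', hz', hhalt⟩ := exists_represents_of_reflTransGen_step hp hr
    (reflTransGen_step_of_mem_eval h) ⟨y, hy, hstart⟩
  exact h_avoid z' hz' hhalt

end Interpretation

section Coding

open BinTerm BinTree Turing.ToPartrec Relation

/-- The subtrees of a tree. -/
def BinTree.subtrees : BinTree → Set BinTree
  | .leaf => {.leaf}
  | .node s t => insert (.node s t) (subtrees s ∪ subtrees t)

theorem BinTree.mem_subtrees_self (t : BinTree) : t ∈ t.subtrees := by
  rcases t with ⟨⟨⟩⟩ | _ | _ <;> simp [subtrees]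

theorem BinTree.finite_subtrees (t : BinTree) : t.subtrees.Finite := by
  induction t with
  | var a => exact a.elim
  | leaf => exact Set.finite_singleton _
  | node s t hs ht => exact (hs.union ht).insert _

theorem BinTree.mem_subtrees_of_node_mem {s t u : BinTree} (h : node s t ∈ u.subtrees) :
    s ∈ u.subtrees ∧ t ∈ u.subtrees := by
  induction u with
  | var a => exact a.elim
  | leaf => simp [subtrees] at h
  | node a b ha hb =>
    simp only [subtrees, Set.mem_insert_iff, Set.mem_union, node.injEq] at h ⊢
    rcases h with ⟨rfl, rfl⟩ | h | h
    · simp [mem_subtrees_self]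
    · simp [ha h]
    · simp [hb h]

theorem BinTree.exists_finset_closed_subtrees (S : Finset BinTree) :
    ∃ T : Finset BinTree, S ⊆ T ∧ ∀ s t, node s t ∈ T → s ∈ T ∧ t ∈ T := by
  have hfin : (⋃ t ∈ S, t.subtrees).Finite := S.finite_toSet.biUnion fun t _ => t.finite_subtrees
  refine ⟨hfin.toFinset, fun t ht => ?_, fun s t h => ?_⟩
  · simpa using ⟨t, ht, t.mem_subtrees_self⟩
  · simp only [Set.Finite.mem_toFinset, Set.mem_iUnion, exists_prop] at h ⊢
    obtain ⟨u, hu, h⟩ := h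
    exact ⟨⟨u, hu, (mem_subtrees_of_node_mem h).1⟩, ⟨u, hu, (mem_subtrees_of_node_mem h).2⟩⟩

/-- The parameters `p` code the set of trees `T`, which is closed under subtrees, and its subset `R`
of reached trees; the tree `t` is represented by `τ t`. -/
structure Codes {L : Type*} [Lattice L] (p : Param → L) (τ : BinTree → L)
    (T R : Finset BinTree) : Prop where
  mem_of_node_mem : ∀ s t, node s t ∈ T → s ∈ T ∧ t ∈ T
  subset : R ⊆ T
  injective : Function.Injective τ
  leaf_eq : p .leaf = τ leaf
  isNode_iff : ∀ x, IsNode p x ↔ ∃ t ∈ T, x = τ t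
  hasChildren_iff : ∀ t ∈ T, ∀ a b, HasChildren p (τ t) (τ a) (τ b) ↔ t = node a b
  le_reached_iff : ∀ t, τ t ≤ p .reached ↔ t ∈ R

namespace Codes

variable {L : Type*} [Lattice L] {p : Param → L} {τ : BinTree → L} {T R : Finset BinTree}
  {α : Type} {xs : α → L} {σ : α → BinTree} {q : BinTerm α}

theorem isNode_apply_iff (h : Codes p τ T R) {t : BinTree} : IsNode p (τ t) ↔ t ∈ T := by
  simp [h.isNode_iff, h.injective.eq_iff]

theorem matches_iff (h : Codes p τ T R) (hxs : ∀ i ∈ q.vars, xs i = τ (σ i)) {x : L} :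
    Matches p xs q x ↔ q.subst σ ∈ T ∧ x = τ (q.subst σ) := by
  induction q generalizing x with
  | var i =>
    rw [Matches, hxs i (by simp [vars]), subst, ← h.isNode_apply_iff]
    exact and_congr_left fun hx => hx ▸ Iff.rfl
  | leaf =>
    rw [Matches, h.leaf_eq, subst, ← h.isNode_apply_iff]
    exact and_congr_left fun hx => hx ▸ Iff.rfl
  | node s t hs ht =>
    simp only [vars, List.mem_append, or_imp, forall_and] at hxs
    simp only [Matches, hs hxs.1, ht hxs.2, subst]
    constructor
    · rintro ⟨hx, _, _, hab, ⟨-, rfl⟩, -, rfl⟩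
      obtain ⟨u, hu, rfl⟩ := (h.isNode_iff x).1 hx
      obtain rfl := (h.hasChildren_iff u hu _ _).1 hab
      exact ⟨hu, rfl⟩
    · rintro ⟨hu, rfl⟩
      exact ⟨h.isNode_apply_iff.2 hu, _, _, (h.hasChildren_iff _ hu _ _).2 rfl,
        ⟨(h.mem_of_node_mem _ _ hu).1, rfl⟩, (h.mem_of_node_mem _ _ hu).2, rfl⟩

theorem represents_iff (h : Codes p τ T R) {t : BinTree} {x : L} :
    Represents p t x ↔ t ∈ T ∧ x = τ t := by
  simpa only [Represents, t.subst_var] using h.matches_iff (q := t) (σ := var) fun i _ => i.elim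

theorem childrenDetermine (h : Codes p τ T R) : ChildrenDetermine p := by
  intro z y a b hz hy ha hb hzab hyab
  rw [h.isNode_iff] at hz hy ha hb
  obtain ⟨z, hz, rfl⟩ := hz
  obtain ⟨y, hy, rfl⟩ := hy
  obtain ⟨a, -, rfl⟩ := ha
  obtain ⟨b, -, rfl⟩ := hb
  rw [(h.hasChildren_iff z hz a b).1 hzab, (h.hasChildren_iff y hy a b).1 hyab]

theorem closedUnderRule (h : Codes p τ T R) (hR : ∀ s ∈ R, ∀ t, Step s t → t ∈ R) (r : Rule) :
    ClosedUnderRule p r := by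
  intro xs z hz hm
  have hvars : ∀ i ∈ r.lhs.vars, ∃ t, xs i = τ t := fun i hi =>
    ((h.isNode_iff _).1 (hm.isNode_of_mem_vars hi)).imp fun _ => And.right
  choose! σ hσ using hvars
  obtain ⟨-, rfl⟩ := (h.matches_iff hσ).1 hm
  have hmem : r.rhs.subst σ ∈ R := hR _ ((h.le_reached_iff _).1 hz) _ (.of_rule r σ)
  exact ⟨_, (h.le_reached_iff _).2 hmem, (h.matches_iff fun i hi =>
    hσ i (Rule.mem_vars_lhs_of_mem_vars_rhs i hi)).2 ⟨h.subset hmem, rfl⟩⟩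

theorem avoidsOutputOne (h : Codes p τ T R) (hR : cfg (.halt [1]) ∉ R) : AvoidsOutputOne p := by
  intro z hz hm
  obtain ⟨-, rfl⟩ := h.represents_iff.1 hm
  exact hR ((h.le_reached_iff _).1 hz)

theorem isSafeRun (h : Codes p τ T R) (hR : ∀ s ∈ R, ∀ t, Step s t → t ∈ R)
    (hR₁ : cfg (.halt [1]) ∉ R) {c : Code} {n : ℕ}
    (hinit : evalCfg (code c) (cont .halt) (list [n]) ∈ R) : IsSafeRun c p (τ (num n)) := by
  refine ⟨h.childrenDetermine, h.closedUnderRule hR, h.avoidsOutputOne hR₁,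
    τ _, (h.le_reached_iff _).2 hinit, (h.matches_iff (σ := fun _ => num n) fun _ _ => rfl).2 ?_⟩
  have hsubst : (initCfg c).subst (fun _ => num n) =
      (evalCfg (code c) (cont .halt) (list [n]) : BinTree) := by
    simp [initCfg, evalCfg, subst, cont, list]
  rw [hsubst]
  exact ⟨h.subset hinit, rfl⟩

end Codes

/-- The generators that represent nodes, those that represent edges, and those that replace the
missing children of the leaf. -/
inductive GeneratorKind
  | node | edge | dummy
  deriving Countable

namespace FreeLattice

variable {G : Type u} (g : BinTree × GeneratorKind → G) {T R : Finset BinTree} (hT : T.Nonempty)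
  (hR : R.Nonempty)

/-- The generator representing the left child of a tree. -/
def leftGenerator : BinTree → BinTree × GeneratorKind
  | .node s _ => (s, .node)
  | t => (t, .dummy)

/-- The generator representing the right child of a tree. -/
def rightGenerator : BinTree → BinTree × GeneratorKind
  | .node _ t => (t, .node)
  | t => (t, .dummy)

/-- Parameters coding `T` and `R` in a free lattice. -/
def params : Param → FreeLattice.{u, v} G
  | .leaf => of (g (leaf, .node))
  | .nodes => T.sup' hT fun t => of (g (t, .node))
  | .edge => T.inf' hT fun t => of (g (t, .node)) ⊔ of (g (t, .edge))
  | .left => T.inf' hT fun t => of (g (t, .edge)) ⊔ of (g (leftGenerator t))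
  | .right => T.inf' hT fun t => of (g (t, .edge)) ⊔ of (g (rightGenerator t))
  | .reached => R.sup' hR fun t => of (g (t, .node))

variable {g hT hR}

theorem isNode_params_iff [Nontrivial G] {x : FreeLattice.{u, v} G} :
    IsNode (params g hT hR) x ↔ ∃ t ∈ T, x = of (g (t, .node)) := by
  rw [IsNode, isDoublyPrime_iff]
  constructor
  · rintro ⟨⟨y, rfl⟩, h⟩
    obtain ⟨t, ht, rfl⟩ := of_le_sup'_of_iff hT |>.1 h
    exact ⟨t, ht, rfl⟩
  · rintro ⟨t, ht, rfl⟩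
    exact ⟨⟨_, rfl⟩, of_le_sup'_of_iff hT |>.2 ⟨t, ht, rfl⟩⟩

theorem hasChildren_params_iff [Nontrivial G] (hg : g.Injective) {t : BinTree} (ht : t ∈ T)
    {a b : BinTree} : HasChildren (params.{u, v} g hT hR) (of (g (t, .node))) (of (g (a, .node)))
      (of (g (b, .node))) ↔ t = node a b := by
  constructor
  · rintro ⟨e, he, h, hl, hr⟩
    obtain ⟨e, rfl⟩ := isDoublyPrime_iff.1 he
    simp only [params, inf'_of_sup_of_le_iff] at h hl hr
    obtain ⟨s, -, h₁, h₂⟩ := h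
    obtain rfl : g (s, .edge) = e := h₂.resolve_left fun h => by simpa using hg h
    obtain rfl : s = t := by simpa [hg.eq_iff] using h₁
    obtain ⟨l, -, hl₁, hl₂⟩ := hl
    obtain ⟨r, -, hr₁, hr₂⟩ := hr
    obtain rfl : l = s := by simpa [hg.eq_iff] using hl₁
    obtain rfl : r = l := by simpa [hg.eq_iff] using hr₁
    rcases r with ⟨⟨⟩⟩ | _ | ⟨c, d⟩ <;>
      simp_all [leftGenerator, rightGenerator, hg.eq_iff]
  · rintro rfl
    exact ⟨of (g (.node a b, .edge)), isDoublyPrime_of _,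
      inf'_of_sup_of_le_iff hT |>.2 ⟨_, ht, .inl rfl, .inr rfl⟩,
      inf'_of_sup_of_le_iff hT |>.2 ⟨_, ht, .inl rfl, .inr rfl⟩,
      inf'_of_sup_of_le_iff hT |>.2 ⟨_, ht, .inl rfl, .inr rfl⟩⟩

theorem codes_params [Nontrivial G] (hg : g.Injective)
    (hsub : ∀ s t, node s t ∈ T → s ∈ T ∧ t ∈ T) (hRT : R ⊆ T) :
    Codes (params.{u, v} g hT hR) (fun t => of (g (t, .node))) T R where
  mem_of_node_mem := hsub
  subset := hRT
  injective := of_injective.comp <| hg.comp <| Prod.mk_left_injective _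
  leaf_eq := rfl
  isNode_iff _ := isNode_params_iff
  hasChildren_iff _ ht _ _ := hasChildren_params_iff hg ht
  le_reached_iff t := by simp [params, of_le_sup'_of_iff, hg.eq_iff]

end FreeLattice

theorem hasSafeRun_freeLattice_of_zero_mem_eval {G : Type u} [Infinite G] {c : Code} {n : ℕ}
    (h : [0] ∈ c.eval [n]) : HasSafeRun c n (FreeLattice.{u, v} G) := by
  classical
  obtain ⟨R, hinit, hR, hR'⟩ := exists_finset_closed_of_reflTransGen Step.rightUnique
    (reflTransGen_step_of_mem_eval h) (not_step_cfg_halt _)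
  have hR₁ : cfg (.halt [1]) ∉ R := fun h₁ => (hR' _ h₁).elim
    (by simp [cfg, retCfg, constr, list, num]) fun ⟨t, ht⟩ => not_step_cfg_halt _ t ht
  obtain ⟨T, hT, hsub⟩ := exists_finset_closed_subtrees (R ∪ (Finset.range (n + 1)).image num)
  have hRT : R ⊆ T := Finset.union_subset_left hT
  have hnum : ∀ i ≤ n, num i ∈ T := fun i hi => Finset.union_subset_right hT <|
    Finset.mem_image_of_mem _ (Finset.mem_range_succ_iff.2 hi)
  obtain ⟨j⟩ := nonempty_embedding_nat (BinTree × GeneratorKind)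
  let g := j.trans (Infinite.natEmbedding G)
  have hp := FreeLattice.codes_params.{u, v} (hT := ⟨_, hRT hinit⟩) (hR := ⟨_, hinit⟩)
    g.injective hsub hRT
  refine ⟨_, fun i => .of (g (num i, .node)), hp.represents_iff.2 ⟨hnum 0 n.zero_le, rfl⟩,
    fun i hi => ?_, hp.isSafeRun hR hR₁ hinit⟩
  exact (hp.matches_iff (q := node leaf (.var ())) (σ := fun _ => num i) fun _ _ => rfl).2
    ⟨hnum (i + 1) hi, rfl⟩

end Coding

/-! ### Definability -/

/-- A property of finite tuples of elements of lattices that is defined, uniformly in all lattices,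
by a first-order formula in the language of posets. -/
def IsElementary {α : Type} (P : ∀ (M : Type v) [Lattice M], (α → M) → Prop) : Prop :=
  ∃ φ : Language.order.Formula α, ∀ (M : Type v) [Lattice M] (x : α → M), φ.Realize x ↔ P M x

namespace IsElementary

variable {α β : Type} {P Q : ∀ (M : Type v) [Lattice M], (α → M) → Prop}

theorem congr (hP : IsElementary P) (h : ∀ (M : Type v) [Lattice M] (x : α → M), P M x ↔ Q M x) :
    IsElementary Q :=
  hP.imp fun _ hφ M _ x => (hφ M x).trans (h M x)

theorem not (hP : IsElementary P) : IsElementary fun M _ x => ¬ P M x := by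
  obtain ⟨φ, hφ⟩ := hP
  exact ⟨∼φ, fun M _ x => not_congr (hφ M x)⟩

theorem imp (hP : IsElementary P) (hQ : IsElementary Q) :
    IsElementary fun M _ x => P M x → Q M x := by
  obtain ⟨φ, hφ⟩ := hP
  obtain ⟨ψ, hψ⟩ := hQ
  exact ⟨φ.imp ψ, fun M _ x => Formula.realize_imp.trans (imp_congr (hφ M x) (hψ M x))⟩

theorem and (hP : IsElementary P) (hQ : IsElementary Q) :
    IsElementary fun M _ x => P M x ∧ Q M x := by
  obtain ⟨φ, hφ⟩ := hP
  obtain ⟨ψ, hψ⟩ := hQ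
  exact ⟨φ ⊓ ψ, fun M _ x => Formula.realize_inf.trans (and_congr (hφ M x) (hψ M x))⟩

theorem or (hP : IsElementary P) (hQ : IsElementary Q) :
    IsElementary fun M _ x => P M x ∨ Q M x := by
  obtain ⟨φ, hφ⟩ := hP
  obtain ⟨ψ, hψ⟩ := hQ
  exact ⟨φ ⊔ ψ, fun M _ x => Formula.realize_sup.trans (or_congr (hφ M x) (hψ M x))⟩

theorem forall_index {ι : Type*} [Finite ι] {P : ι → ∀ (M : Type v) [Lattice M], (α → M) → Prop}
    (hP : ∀ i, IsElementary (P i)) : IsElementary fun M _ x => ∀ i, P i M x := by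
  choose φ hφ using hP
  exact ⟨Formula.iInf φ, fun M _ x => Formula.realize_iInf.trans (forall_congr' fun i => hφ i M x)⟩

theorem forall_tuple [Finite β] {P : ∀ (M : Type v) [Lattice M], (α ⊕ β → M) → Prop}
    (hP : IsElementary P) : IsElementary fun M _ x => ∀ y : β → M, P M (Sum.elim x y) := by
  obtain ⟨φ, hφ⟩ := hP
  exact ⟨φ.iAlls β, fun M _ x => Formula.realize_iAlls.trans (forall_congr' fun y => hφ M _)⟩

theorem all {P : ∀ (M : Type v) [Lattice M], (α ⊕ Unit → M) → Prop} (hP : IsElementary P) :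
    IsElementary fun M _ x => ∀ y : M, P M (Sum.elim x fun _ => y) :=
  hP.forall_tuple.congr fun _ _ _ => ⟨fun h _ => h _, fun h y => h (y ())⟩

theorem ex {P : ∀ (M : Type v) [Lattice M], (α ⊕ Unit → M) → Prop} (hP : IsElementary P) :
    IsElementary fun M _ x => ∃ y : M, P M (Sum.elim x fun _ => y) :=
  hP.not.all.not.congr fun _ _ _ => by simp

theorem le (x y : α) : IsElementary.{v} fun _ _ v => v x ≤ v y :=
  ⟨(Term.var (.inl x)).le (Term.var (.inl y)), fun _ _ _ => Iff.rfl⟩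

theorem eq (x y : α) : IsElementary.{v} fun _ _ v => v x = v y :=
  ((le x y).and (le y x)).congr fun _ _ _ => le_antisymm_iff.symm

theorem le_sup (w x y : α) : IsElementary.{v} fun _ _ v => v w ≤ v x ⊔ v y := by
  have h := ((le (Sum.inl x) (Sum.inr ())).imp
    ((le (Sum.inl y) (.inr ())).imp (le (Sum.inl w) (.inr ())))).all
  exact h.congr fun _ _ _ =>
    ⟨fun h => h _ le_sup_left le_sup_right, fun h _ hx hy => h.trans (sup_le hx hy)⟩

theorem inf_le (w x y : α) : IsElementary.{v} fun _ _ v => v x ⊓ v y ≤ v w := by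
  have h := ((le (Sum.inr ()) (Sum.inl x)).imp
    ((le (Sum.inr ()) (.inl y)).imp (le (Sum.inr ()) (.inl w)))).all
  exact h.congr fun _ _ _ =>
    ⟨fun h => h _ inf_le_left inf_le_right, fun h _ hx hy => (le_inf hx hy).trans h⟩

theorem supPrime (x : α) : IsElementary.{v} fun _ _ v => SupPrime (v x) :=
  ((le (.inr ()) (.inl x)).imp (le (.inl x) (.inr ()))).all.not.and
    ((le_sup (.inl (.inl x)) (.inl (.inr ())) (.inr ())).imp
      ((le (.inl (.inl x)) (.inl (.inr ()))).or (le (.inl (.inl x)) (.inr ())))).all.all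

theorem infPrime (x : α) : IsElementary.{v} fun _ _ v => InfPrime (v x) :=
  ((le (.inl x) (.inr ())).imp (le (.inr ()) (.inl x))).all.not.and
    ((inf_le (.inl (.inl x)) (.inl (.inr ())) (.inr ())).imp
      ((le (.inl (.inr ())) (.inl (.inl x))).or (le (.inr ()) (.inl (.inl x))))).all.all

theorem isDoublyPrime (x : α) : IsElementary.{v} fun _ _ v => IsDoublyPrime (v x) :=
  (supPrime x).and (infPrime x)

theorem isNode (p : Param → α) (x : α) : IsElementary.{v} fun _ _ v => IsNode (v ∘ p) (v x) :=
  (isDoublyPrime x).and (le x (p .nodes))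

theorem hasChildren (p : Param → α) (z a b : α) :
    IsElementary.{v} fun _ _ v => HasChildren (v ∘ p) (v z) (v a) (v b) :=
  ((isDoublyPrime (.inr ())).and <| (le_sup (.inl (p .edge)) (.inl z) (.inr ())).and <|
    (le_sup (.inl (p .left)) (.inr ()) (.inl a)).and
      (le_sup (.inl (p .right)) (.inr ()) (.inl b))).ex

theorem matchesTerm (p : Param → α) (xs : β → α) (t : BinTerm β) (z : α) :
    IsElementary.{v} fun _ _ v => Matches (v ∘ p) (v ∘ xs) t (v z) := by
  induction t generalizing α with
  | var i => exact (isNode p z).and (eq z (xs i))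
  | leaf => exact (isNode p z).and (eq z (p .leaf))
  | node s t hs ht =>
    exact (isNode p z).and ((hasChildren (.inl ∘ .inl ∘ p) (.inl (.inl z)) (.inl (.inr ()))
      (.inr ())).and ((hs (.inl ∘ .inl ∘ p) (.inl ∘ .inl ∘ xs) (.inl (.inr ()))).and
        (ht (.inl ∘ .inl ∘ p) (.inl ∘ .inl ∘ xs) (.inr ())))).ex.ex

theorem represents (p : Param → α) (t : BinTree) (z : α) :
    IsElementary.{v} fun _ _ v => Represents (v ∘ p) t (v z) :=
  (matchesTerm p Empty.elim t z).congr fun _ _ _ => by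
    rw [Represents, Subsingleton.elim (_ ∘ Empty.elim) Empty.elim]

theorem childrenDetermine (p : Param → α) :
    IsElementary.{v} fun _ _ v => ChildrenDetermine (v ∘ p) := by
  let p' : Param → ((((α ⊕ Unit) ⊕ Unit) ⊕ Unit) ⊕ Unit) := .inl ∘ .inl ∘ .inl ∘ .inl ∘ p
  let z : (((α ⊕ Unit) ⊕ Unit) ⊕ Unit) ⊕ Unit := .inl (.inl (.inl (.inr ())))
  let y : (((α ⊕ Unit) ⊕ Unit) ⊕ Unit) ⊕ Unit := .inl (.inl (.inr ()))
  let a : (((α ⊕ Unit) ⊕ Unit) ⊕ Unit) ⊕ Unit := .inl (.inr ())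
  let b : (((α ⊕ Unit) ⊕ Unit) ⊕ Unit) ⊕ Unit := .inr ()
  exact ((isNode p' z).imp <| (isNode p' y).imp <| (isNode p' a).imp <| (isNode p' b).imp <|
    (hasChildren p' z a b).imp <| (hasChildren p' y a b).imp <| eq z y).all.all.all.all

theorem closedUnderRule (p : Param → α) (r : Rule) :
    IsElementary.{v} fun _ _ v => ClosedUnderRule (v ∘ p) r := by
  let p' : Param → (α ⊕ RuleVar) ⊕ Unit := .inl ∘ .inl ∘ p
  let xs : RuleVar → (α ⊕ RuleVar) ⊕ Unit := .inl ∘ .inr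
  exact ((le (.inr ()) (p' .reached)).imp <| (matchesTerm p' xs r.lhs (.inr ())).imp
    ((le (.inr ()) (.inl (p' .reached))).and
      (matchesTerm (.inl ∘ p') (.inl ∘ xs) r.rhs (.inr ()))).ex).all.forall_tuple

theorem avoidsOutputOne (p : Param → α) :
    IsElementary.{v} fun _ _ v => AvoidsOutputOne (v ∘ p) :=
  ((le (.inr ()) (.inl (p .reached))).imp (represents (.inl ∘ p) _ (.inr ())).not).all

theorem isSafeRun (c : Turing.ToPartrec.Code) (p : Param → α) (z : α) :
    IsElementary.{v} fun _ _ v => IsSafeRun c (v ∘ p) (v z) :=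
  (childrenDetermine p).and <| (forall_index fun r => closedUnderRule p r).and <|
    (avoidsOutputOne p).and <| ((le (.inr ()) (.inl (p .reached))).and
      (matchesTerm (.inl ∘ p) (fun _ => .inl z) (initCfg c) (.inr ()))).ex

theorem isSucc (p : Param → α) (z z' : α) :
    IsElementary.{v} fun _ _ v => IsSucc (v ∘ p) (v z) (v z') :=
  matchesTerm p (fun _ => z) _ z'

end IsElementary

/-! ### Computability of the Gödel encoding -/

section SymbolCodes

open BoundedFormula

variable {n : ℕ}

/-- The codes of the symbols of a formula; the Gödel number of a sentence is the code of this
list. -/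
def symbolCodes (φ : Language.order.BoundedFormula Empty n) : List ℕ :=
  φ.listEncode.map Encodable.encode

theorem encode_map_encode {α : Type*} [Encodable α] (l : List α) :
    Encodable.encode (l.map Encodable.encode) = Encodable.encode l := by
  induction l with
  | nil => rfl
  | cons a l ih => simp [ih]

theorem encode_sentence (φ : Language.order.Sentence) :
    Encodable.encode φ = Encodable.encode (symbolCodes φ) :=
  (encode_map_encode φ.listEncode).symm

theorem symbolCodes_imp (φ ψ : Language.order.BoundedFormula Empty n) :
    symbolCodes (φ ⟹ ψ) = 3 :: (symbolCodes φ ++ symbolCodes ψ) := by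
  simp [symbolCodes, listEncode]

theorem symbolCodes_all (φ : Language.order.BoundedFormula Empty (n + 1)) :
    symbolCodes φ.all = 7 :: symbolCodes φ := by
  simp [symbolCodes, listEncode]

theorem symbolCodes_foldr_imp (l : List (Language.order.BoundedFormula Empty n))
    (φ : Language.order.BoundedFormula Empty n) :
    symbolCodes (l.foldr BoundedFormula.imp φ) =
      l.flatMap (fun ψ => 3 :: symbolCodes ψ) ++ symbolCodes φ := by
  induction l with
  | nil => rfl
  | cons ψ l ih => simp [symbolCodes_imp, ih]

theorem symbolCodes_alls (φ : Language.order.BoundedFormula Empty n) :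
    symbolCodes φ.alls = (List.range n).map (fun _ => 7) ++ symbolCodes φ := by
  induction n with
  | zero => rfl
  | succ n ih => simp [alls, ih, symbolCodes_all, List.range_succ]

variable {α γ : Type*} [Primcodable γ] {d : γ → ℕ}

/-- A number `k` among the symbols of a formula has the code `2 * (2 * k + 1) + 1`; so `3` and `7`
stand for implication and universal quantification. -/
theorem primrec_symbolCode {f : γ → ℕ} (hf : Primrec f) :
    Primrec fun c => 2 * (2 * f c + 1) + 1 :=
  have h : Primrec (2 * ·) := Primrec.nat_mul.comp (.const 2) .id
  Primrec.succ.comp (h.comp (Primrec.succ.comp (h.comp hf)))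

theorem primrec_encode_term {x : ∀ c, α → Fin (d c)} (hd : Primrec d)
    (hx : ∀ a, Primrec fun c => (x c a : ℕ)) {k : ℕ} (t : Language.order.Term (α ⊕ Fin k)) :
    Primrec fun c => Encodable.encode (α := Σ n, Language.order.Term (Empty ⊕ Fin n))
      ⟨d c + k, t.relabel (relabelAux (Sum.inr ∘ x c) k)⟩ := by
  have hmul : Primrec (2 * ·) := Primrec.nat_mul.comp (.const 2) .id
  have hvar {i : ∀ c, Fin (d c + k)} (hi : Primrec fun c => (i c : ℕ)) :
      Primrec fun c => Encodable.encode (α := Σ n, Language.order.Term (Empty ⊕ Fin n))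
        ⟨d c + k, Term.var (.inr (i c))⟩ :=
    show Primrec fun c => Nat.pair (d c + k) (Nat.succ (Nat.pair (2 * (2 * (i c : ℕ) + 1)) 0)) from
      Primrec₂.natPair.comp (Primrec.nat_add.comp hd (.const k)) <| Primrec.succ.comp <|
        Primrec₂.natPair.comp (hmul.comp (Primrec.succ.comp (hmul.comp hi))) (.const 0)
  match t with
  | .var (.inl a) => exact hvar (hx a)
  | .var (.inr i) =>
    exact hvar (show Primrec fun c => (Fin.natAdd (d c) i : ℕ) from
      Primrec.nat_add.comp hd (.const i.val))

theorem primrec_symbolCodes_relabel {x : ∀ c, α → Fin (d c)} (hd : Primrec d)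
    (hx : ∀ a, Primrec fun c => (x c a : ℕ)) {k : ℕ} (φ : Language.order.BoundedFormula α k) :
    Primrec fun c => symbolCodes (relabel (β := Empty) (Sum.inr ∘ x c) φ) := by
  have hterm {k : ℕ} (t : Language.order.Term (α ⊕ Fin k)) :=
    Primrec.nat_mul.comp (.const 2) (primrec_encode_term hd hx t)
  have hadd (k : ℕ) : Primrec fun c => d c + k := Primrec.nat_add.comp hd (.const k)
  induction φ with
  | @falsum k =>
    exact Primrec.list_cons.comp (primrec_symbolCode (hadd (k + 2))) (.const [])
  | equal t₁ t₂ =>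
    exact Primrec.list_cons.comp (hterm t₁) (Primrec.list_cons.comp (hterm t₂) (.const []))
  | @rel k l R ts =>
    match l, R with
    | _, .le =>
      exact Primrec.list_cons.comp (.const 1) <|
        Primrec.list_cons.comp (primrec_symbolCode (hadd k)) <|
          Primrec.list_cons.comp (hterm (ts 0)) <|
            Primrec.list_cons.comp (hterm (ts 1)) (.const [])
  | imp φ ψ hφ hψ =>
    simp only [relabel_imp, symbolCodes_imp]
    exact Primrec.list_cons.comp (.const 3) (Primrec.list_append.comp hφ hψ)
  | all φ hφ =>
    simp only [relabel_all, symbolCodes_all]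
    exact Primrec.list_cons.comp (.const 7) hφ

end SymbolCodes

section UniformSentences

variable {α : Type}

/-- The formula `φ` with the bound variables `x` of an enclosing formula in place of its free
variables. -/
def bindFree {d : ℕ} (x : α → Fin d) (φ : Language.order.Formula α) :
    Language.order.BoundedFormula Empty d :=
  BoundedFormula.relabel (k := 0) (Sum.inr ∘ x) φ

theorem realize_bindFree {d : ℕ} {x : α → Fin d} {φ : Language.order.Formula α} {M : Type*}
    [Language.order.Structure M] {v : Empty → M} {xs : Fin d → M} :
    (bindFree x φ).Realize v xs ↔ φ.Realize (xs ∘ x) :=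
  BoundedFormula.realize_relabel.trans <| iff_of_eq <|
    congrArg (BoundedFormula.Realize φ (xs ∘ x)) (Subsingleton.elim _ _)

/-- The bound variables standing for `m` parameters, numbered by `e`, and for the `i`th and `j`th
members of a chain of `n + 1` elements; the chain is listed after the parameters. -/
def chainVars {m : ℕ} (e : α ≃ Fin m) (n i j : ℕ) : α ⊕ Fin 2 → Fin (m + n + 1) :=
  Sum.elim (fun a => Fin.ofNat _ (e a)) ((fun k => Fin.ofNat _ (m + k)) ∘ ![i, j])

/-- The sentence stating that `φ` holds between the first and the last member of every chain of
length `n` whose successive members are related by `σ`, for all values of the parameters. -/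
def chainSentence {m : ℕ} (e : α ≃ Fin m) (σ φ : Language.order.Formula (α ⊕ Fin 2)) (n : ℕ) :
    Language.order.Sentence :=
  (((List.range n).map fun i => bindFree (chainVars e n i (i + 1)) σ).foldr BoundedFormula.imp
    (bindFree (chainVars e n 0 n) φ)).alls

theorem primrec_encode_chainSentence {m : ℕ} (e : α ≃ Fin m)
    (σ φ : Language.order.Formula (α ⊕ Fin 2)) :
    Primrec fun n => Encodable.encode (chainSentence e σ φ n) := by
  have hd : Primrec fun n => m + n + 1 := Primrec.succ.comp (Primrec.nat_add.comp (.const m) .id)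
  have hvars {γ : Type} [Primcodable γ] {n i j : γ → ℕ} (hn : Primrec n) (hi : Primrec i)
      (hj : Primrec j) (ψ : Language.order.Formula (α ⊕ Fin 2)) :
      Primrec fun c => symbolCodes (bindFree (chainVars e (n c) (i c) (j c)) ψ) := by
    refine primrec_symbolCodes_relabel (hd.comp hn) ?_ ψ
    have hmod {f : γ → ℕ} (hf : Primrec f) :
        Primrec fun c => (Fin.ofNat (m + n c + 1) (f c) : ℕ) :=
      Primrec.nat_mod.comp hf (hd.comp hn)
    rintro (a | k)
    · exact hmod (.const _)
    · fin_cases k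
      exacts [hmod (Primrec.nat_add.comp (.const m) hi), hmod (Primrec.nat_add.comp (.const m) hj)]
  simp only [encode_sentence, chainSentence, symbolCodes_alls, symbolCodes_foldr_imp,
    List.flatMap_map]
  exact Primrec.encode.comp <| Primrec.list_append.comp
    (Primrec.list_map (Primrec.list_range.comp hd) (.const 7)) <| Primrec.list_append.comp
      (Primrec.list_flatMap Primrec.list_range <| Primrec.list_cons.comp (.const 3) <|
        hvars .fst .snd (Primrec.succ.comp .snd) σ)
      (hvars .id (.const 0) .id φ)

theorem realize_chainSentence {m : ℕ} (e : α ≃ Fin m) {σ φ : Language.order.Formula (α ⊕ Fin 2)}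
    {n : ℕ} {M : Type*} [Language.order.Structure M] :
    M ⊨ chainSentence e σ φ n ↔ ∀ (p : α → M) (z : ℕ → M),
      (∀ i < n, σ.Realize (Sum.elim p (z ∘ ![i, i + 1]))) →
        φ.Realize (Sum.elim p (z ∘ ![0, n])) := by
  have hrealize : M ⊨ chainSentence e σ φ n ↔ ∀ xs : Fin (m + n + 1) → M,
      (∀ i < n, σ.Realize (xs ∘ chainVars e n i (i + 1))) →
        φ.Realize (xs ∘ chainVars e n 0 n) := by
    refine BoundedFormula.realize_alls.trans (forall_congr' fun xs => ?_)
    rw [BoundedFormula.realize_foldr_imp]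
    simp only [List.forall_mem_map, List.mem_range, realize_bindFree]
  refine hrealize.trans ⟨fun h p z => ?_, fun h xs => ?_⟩
  · let xs (k : Fin (m + n + 1)) : M :=
      if hk : k < m then p (e.symm ⟨k, hk⟩) else z (k - m)
    have hxs {i j : ℕ} (hi : i ≤ n) (hj : j ≤ n) :
        xs ∘ chainVars e n i j = Sum.elim p (z ∘ ![i, j]) := by
      have hz {k : ℕ} (hk : k ≤ n) : xs (Fin.ofNat _ (m + k)) = z k := by
        simp [xs, Nat.mod_eq_of_lt (show m + k < m + n + 1 by omega)]
      funext k
      rcases k with a | k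
      · have ha := (e a).isLt
        simp [xs, chainVars, Nat.mod_eq_of_lt (show (e a : ℕ) < m + n + 1 by omega)]
      · fin_cases k
        exacts [hz hi, hz hj]
    have h := h xs
    rw [hxs n.zero_le le_rfl] at h
    exact fun hz => h fun i hi => by rw [hxs hi.le hi]; exact hz i hi
  · simp only [chainVars, Sum.comp_elim]
    exact h (fun a => xs (Fin.ofNat _ (e a))) fun k => xs (Fin.ofNat _ (m + k))

end UniformSentences

theorem exists_primrec_sentence_not_hasSafeRun (c : Turing.ToPartrec.Code) :
    ∃ σ : ℕ → Language.order.Sentence, Primrec (fun n => Encodable.encode (σ n)) ∧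
      ∀ (n : ℕ) (M : Type v) [Lattice M], M ⊨ σ n ↔ ¬ HasSafeRun c n M := by
  obtain ⟨σ, hσ⟩ := IsElementary.isSucc.{v} (α := Param ⊕ Fin 2) .inl (.inr 0) (.inr 1)
  obtain ⟨φ, hφ⟩ := ((IsElementary.represents.{v} (α := Param ⊕ Fin 2) .inl .leaf (.inr 0)).and
    (.isSafeRun c .inl (.inr 1))).not
  refine ⟨chainSentence (Fintype.equivFin Param) σ φ, primrec_encode_chainSentence _ _ _,
    fun n M _ => (realize_chainSentence _).trans ?_⟩
  simp only [hσ, hφ]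
  exact ⟨fun h ⟨p, z, h₀, hsucc, hrun⟩ => h p z hsucc ⟨h₀, hrun⟩,
    fun h p z hsucc ⟨h₀, hrun⟩ => h ⟨p, z, h₀, hsucc, hrun⟩⟩

theorem theory_of_free_lattices_undecidable_general {G : Type u} [Infinite G] :
    ¬ ∃ f : ℕ → Bool, Computable f ∧
      (∀ φ : Language.order.Sentence,
        (∀ (M : Type max u v) [Lattice M], M ⊨ φ) → f (Encodable.encode φ) = true) ∧
      ∀ φ : Language.order.Sentence,
        f (Encodable.encode φ) = true → FreeLattice.{u, v} G ⊨ φ := by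
  rintro ⟨f, hf, hvalid, hfree⟩
  obtain ⟨c, hc⟩ := exists_code_computably_inseparable
  obtain ⟨σ, hσ, hrealize⟩ := exists_primrec_sentence_not_hasSafeRun.{max u v} c
  obtain ⟨n, hn⟩ := hc (fun n => f (Encodable.encode (σ n))) (hf.comp hσ.to_comp)
  cases h : f (Encodable.encode (σ n)) with
  | true =>
    rw [h] at hn
    exact (hrealize n _).1 (hfree _ h) (hasSafeRun_freeLattice_of_zero_mem_eval hn)
  | false =>
    rw [h] at hn
    have htrue := hvalid (σ n) fun M _ => (hrealize n M).2 (not_hasSafeRun_of_one_mem_eval hn)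
    exact Bool.false_ne_true (h.symm.trans htrue)

/-- **Theorem (Statement 0).** The common first-order theory of free lattices is
undecidable: there is no computable function deciding, via the Gödel encoding, whether
a sentence in the language of posets is true in every free lattice. -/
theorem theory_of_free_lattices_undecidable :
    ¬ ∃ f : ℕ → Bool, Computable f ∧
      ∀ φ : Language.order.Sentence,
        f (Encodable.encode φ) = true ↔
          ∀ (X : Type u) (F : Type v) [Lattice F] (ι : X → F),
            Nonempty X → IsFreeLatticeOn.{u, v, w} ι → F ⊨ φ := by
  rintro ⟨f, hf, h⟩
  exact theory_of_free_lattices_undecidable_general.{0, v} (G := ℕ) ⟨f, hf,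
    fun φ hφ => (h φ).2 fun _ F _ _ _ _ => hφ F,
    fun φ hφ => (h φ).1 hφ (ULift ℕ) _ _ ⟨⟨0⟩⟩ (FreeLattice.isFreeLatticeOn Equiv.ulift)⟩
end

section
/- The common first-order theory of finitely generated free lattices is undecidable: the set of sentences in the language of posets that are true in the free lattice on X for every finite nonempty set X is not decidable. -/
open FirstOrder FirstOrder.Language

attribute [local instance] FirstOrder.Language.orderStructure

universe u u' v v' w w'

/-!
The halting problem is reduced to the theory. In a free lattice the doubly prime elements are the
generators, and a meet `x ⊓ y` of two distinct generators lies below a join of such meets only if it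
is one of them. So every graph on the generators is coded by a single element, and suitable codings
of directed relations by graphs make arbitrarily long initial segments of `ℕ`, with all their binary
relations, definable with parameters in finitely generated free lattices. Conversely, if there are
only finitely many doubly prime elements and the coded order is strict, then every coded number is
reached from zero in finitely many successor steps. Hence a partial recursive function has a
defining formula that is correct for all parameters satisfying the order axioms and complete in all
long enough initial segments. The sentence saying that this formula assigns no value to `n` is
therefore true in all finitely generated free lattices exactly if the function is undefined at `n`;
it is computable from `n`, since the number `n` is described by a chain of `n` successor steps.
-/

namespace FreeLatticeTheory

/-! ### Numbers coded by doubly prime elements of a lattice -/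

/-- An element that is both join prime and meet prime; in a free lattice on at least two generators
these are exactly the generators. -/
def DoublyPrime {F : Type*} [Lattice F] (a : F) : Prop :=
  SupPrime a ∧ InfPrime a

/-- Parameters for an interpretation of arithmetic in a lattice `F`: the doubly prime elements are
its individuals, every element of `F` codes a binary relation on them with the help of `link`, and
the numbers are `zero` together with everything above `zero` in the relation coded by `lt`. -/
structure Coding (F : Type*) where
  lt : F
  link : F
  zero : F

namespace Coding

/-- The image of a coding; it turns a triple of variables into their values. -/
def map {α β : Type*} (e : α → β) (c : Coding α) : Coding β :=
  ⟨e c.lt, e c.link, e c.zero⟩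

variable {F : Type*} [Lattice F] (c : Coding F)

/-- The binary relation on doubly prime elements coded by `p`. The inequality `a ⊓ z ≤ p` is
symmetric in `a` and `z`, so a directed pair `(a, b)` is coded through a copy `z` of `b`, which
`link` attaches to `b`. -/
def Rel (p a b : F) : Prop :=
  DoublyPrime a ∧ DoublyPrime b ∧ ∃ z, DoublyPrime z ∧ a ⊓ z ≤ p ∧ z ⊓ b ≤ c.link

/-- The elements playing the role of natural numbers. -/
def IsNumber (x : F) : Prop :=
  x = c.zero ∨ c.Rel c.lt c.zero x

/-- The order of the coded numbers. -/
def Lt (x y : F) : Prop :=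
  c.IsNumber x ∧ c.IsNumber y ∧ c.Rel c.lt x y

/-- The number `y` is an immediate successor of `x`. -/
def IsSucc (x y : F) : Prop :=
  c.Lt x y ∧ ¬ ∃ z, c.Lt x z ∧ c.Lt z y

/-- The element `x` is reached from `zero` in `n` successor steps. Neither existence nor uniqueness
of such an element is guaranteed. -/
def Represents : ℕ → F → Prop
  | 0, x => x = c.zero
  | n + 1, x => ∃ w, c.IsSucc w x ∧ Represents n w

end Coding

theorem transGen_covers_of_finite {α : Type*} [Finite α] (r : α → α → Prop) [IsStrictOrder α r]
    {a b : α} (hab : r a b) : Relation.TransGen (fun x y => r x y ∧ ¬ ∃ z, r x z ∧ r z y) a b := by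
  classical
  have := Fintype.ofFinite α
  let : PartialOrder α := partialOrderOfSO r
  let : LocallyFiniteOrder α := Fintype.toLocallyFiniteOrder
  exact Relation.TransGen.mono (fun x y hxy => ⟨hxy.1, fun ⟨z, hxz, hzy⟩ => hxy.2 hxz hzy⟩) a b
    (lt_iff_transGen_covBy.1 (show a < b from hab))

namespace Coding

variable {F : Type*} [Lattice F] {c : Coding F}

section StrictOrder

variable [IsStrictOrder F c.Lt]

theorem eq_zero_of_represents_zero {n : ℕ} (h : c.Represents n c.zero) : n = 0 := by
  cases n with
  | zero => rfl
  | succ n =>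
    obtain ⟨w, ⟨hw, -⟩, -⟩ := h
    rcases hw.1 with rfl | hzero_w
    · exact (irrefl_of c.Lt _ hw).elim
    · exact (asymm_of c.Lt hw ⟨hw.2.1, hw.1, hzero_w⟩).elim

theorem Represents.exists_lt {k n : ℕ} (hk : k < n) {y : F} (h : c.Represents n y) :
    ∃ x, c.Represents k x ∧ c.Lt x y := by
  induction n generalizing y with
  | zero => omega
  | succ n ih =>
    obtain ⟨w, hwy, hw⟩ := h
    rcases Nat.lt_succ_iff_lt_or_eq.1 hk with hk | rfl
    · obtain ⟨x, hx, hxw⟩ := ih hk hw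
      exact ⟨x, hx, trans_of c.Lt hxw hwy.1⟩
    · exact ⟨w, hw, hwy.1⟩

theorem IsNumber.exists_represents [Finite {a : F // DoublyPrime a}] {y : F}
    (hy : c.IsNumber y) : ∃ n, c.Represents n y := by
  rcases hy with rfl | hzero_y
  · exact ⟨0, rfl⟩
  have hfinite : {a : F | DoublyPrime a}.Finite := ‹Finite {a : F // DoublyPrime a}›
  have : Finite {x : F // c.IsNumber x} :=
    (hfinite.insert c.zero).subset fun x hx => hx.imp_right fun h => h.2.1
  let r (x y : {x : F // c.IsNumber x}) : Prop := c.Lt x y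
  have : IsStrictOrder _ r := (Subrel.relEmbedding c.Lt c.IsNumber).isStrictOrder
  have hsucc {x y} (h : r x y ∧ ¬ ∃ z, r x z ∧ r z y) : c.IsSucc (x : F) y :=
    ⟨h.1, fun ⟨z, hxz, hzy⟩ => h.2 ⟨⟨z, hxz.2.1⟩, hxz, hzy⟩⟩
  have hreach {b} (h : Relation.TransGen (fun x y => r x y ∧ ¬ ∃ z, r x z ∧ r z y)
      ⟨c.zero, .inl rfl⟩ b) : ∃ n, c.Represents n (b : F) := by
    induction h with
    | single h => exact ⟨1, _, hsucc h, rfl⟩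
    | tail _ h ih =>
      obtain ⟨n, hn⟩ := ih
      exact ⟨n + 1, _, hsucc h, hn⟩
  exact hreach (transGen_covers_of_finite r (b := ⟨y, .inr hzero_y⟩)
    ⟨.inl rfl, .inr hzero_y, hzero_y⟩)

end StrictOrder

/-- On the individuals `g 0, …, g N`, the relation coded by `p` is `R`. -/
def CodesOn (c : Coding F) (N : ℕ) (g : ℕ → F) (p : F) (R : ℕ → ℕ → Prop) : Prop :=
  ∀ i ≤ N, ∀ z, c.Rel p (g i) z ↔ ∃ j ≤ N, z = g j ∧ R i j

/-- The coded numbers are the initial segment `0, …, N` of the natural numbers, enumerated by `g`,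
and every binary relation on this segment is coded. The values of `g` beyond `N` are junk. -/
structure IsStandard (c : Coding F) (N : ℕ) (g : ℕ → F) : Prop where
  zero : g 0 = c.zero
  injOn : Set.InjOn g (Set.Iic N)
  lt : c.CodesOn N g c.lt (· < ·)
  exists_codesOn : ∀ R, ∃ p, c.CodesOn N g p R

namespace IsStandard

variable {N : ℕ} {g : ℕ → F} (h : c.IsStandard N g)
include h

theorem isNumber_iff {x : F} : c.IsNumber x ↔ ∃ i ≤ N, x = g i := by
  rw [IsNumber, ← h.zero, h.lt 0 (Nat.zero_le N)]
  constructor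
  · rintro (rfl | ⟨j, hj, rfl, -⟩)
    exacts [⟨0, Nat.zero_le N, rfl⟩, ⟨j, hj, rfl⟩]
  · rintro ⟨i, hi, rfl⟩
    rcases Nat.eq_zero_or_pos i with rfl | hpos
    exacts [.inl rfl, .inr ⟨i, hi, rfl, hpos⟩]

theorem lt_iff {x y : F} : c.Lt x y ↔ ∃ i j, i < j ∧ j ≤ N ∧ x = g i ∧ y = g j := by
  constructor
  · rintro ⟨hx, -, hxy⟩
    obtain ⟨i, hi, rfl⟩ := h.isNumber_iff.1 hx
    obtain ⟨j, hj, rfl, hij⟩ := (h.lt i hi _).1 hxy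
    exact ⟨i, j, hij, hj, rfl, rfl⟩
  · rintro ⟨i, j, hij, hj, rfl, rfl⟩
    have hi : i ≤ N := hij.le.trans hj
    exact ⟨h.isNumber_iff.2 ⟨i, hi, rfl⟩, h.isNumber_iff.2 ⟨j, hj, rfl⟩,
      (h.lt i hi _).2 ⟨j, hj, rfl, hij⟩⟩

theorem lt_apply_iff {i j : ℕ} (hi : i ≤ N) (hj : j ≤ N) : c.Lt (g i) (g j) ↔ i < j := by
  rw [h.lt_iff]
  constructor
  · rintro ⟨i', j', hij, hj', hi_eq, hj_eq⟩
    rwa [h.injOn hi (hij.le.trans hj') hi_eq, h.injOn hj hj' hj_eq]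
  · exact fun hij => ⟨i, j, hij, hj, rfl, rfl⟩

theorem isStrictOrder : IsStrictOrder F c.Lt where
  irrefl x hx := by
    obtain ⟨i, hi, rfl⟩ := h.isNumber_iff.1 hx.1
    exact lt_irrefl i ((h.lt_apply_iff hi hi).1 hx)
  trans x y z hxy hyz := by
    obtain ⟨i, hi, rfl⟩ := h.isNumber_iff.1 hxy.1
    obtain ⟨j, hj, rfl⟩ := h.isNumber_iff.1 hyz.1
    obtain ⟨k, hk, rfl⟩ := h.isNumber_iff.1 hyz.2.1
    rw [h.lt_apply_iff hi hj] at hxy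
    rw [h.lt_apply_iff hj hk] at hyz
    exact (h.lt_apply_iff hi hk).2 (hxy.trans hyz)

theorem isSucc_iff {x y : F} : c.IsSucc x y ↔ ∃ i, i + 1 ≤ N ∧ x = g i ∧ y = g (i + 1) := by
  constructor
  · rintro ⟨hxy, hnone⟩
    obtain ⟨i, j, hij, hj, rfl, rfl⟩ := h.lt_iff.1 hxy
    have hi : i + 1 ≤ N := Nat.succ_le_of_lt hij |>.trans hj
    obtain rfl : j = i + 1 := by
      by_contra hne
      exact hnone ⟨g (i + 1), (h.lt_apply_iff (by omega) hi).2 (by omega),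
        (h.lt_apply_iff hi hj).2 (by omega)⟩
    exact ⟨i, hi, rfl, rfl⟩
  · rintro ⟨i, hi, rfl, rfl⟩
    have hi' : i ≤ N := (Nat.le_succ i).trans hi
    refine ⟨(h.lt_apply_iff hi' hi).2 (Nat.lt_succ_self i), ?_⟩
    rintro ⟨z, hlt, hgt⟩
    obtain ⟨k, hk, rfl⟩ := h.isNumber_iff.1 hlt.2.1
    rw [h.lt_apply_iff hi' hk] at hlt
    rw [h.lt_apply_iff hk hi] at hgt
    omega

theorem represents {n : ℕ} (hn : n ≤ N) : c.Represents n (g n) := by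
  induction n with
  | zero => exact h.zero
  | succ n ih => exact ⟨g n, h.isSucc_iff.2 ⟨n, hn, rfl, rfl⟩, ih (Nat.le_of_succ_le hn)⟩

end IsStandard

end Coding

/-! ### Free lattices -/

/-- Lattice words in the letters `X`. The target universe is larger than needed so that countable
free lattices are available in every universe. -/
inductive LatticeWord (X : Type u) : Type (max u v)
  | var : X → LatticeWord X
  | sup : LatticeWord X → LatticeWord X → LatticeWord X
  | inf : LatticeWord X → LatticeWord X → LatticeWord X

namespace LatticeWord

variable {X : Type u}

/-- The least preorder on words that makes `sup` and `inf` suprema and infima. -/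
inductive Le : LatticeWord.{u, v} X → LatticeWord.{u, v} X → Prop
  | refl a : Le a a
  | trans {a b c} : Le a b → Le b c → Le a c
  | le_sup_left a b : Le a (sup a b)
  | le_sup_right a b : Le b (sup a b)
  | sup_le {a b c} : Le a c → Le b c → Le (sup a b) c
  | inf_le_left a b : Le (inf a b) a
  | inf_le_right a b : Le (inf a b) b
  | le_inf {a b c} : Le a b → Le a c → Le a (inf b c)

instance : Preorder (LatticeWord.{u, v} X) where
  le := Le
  le_refl := Le.refl
  le_trans _ _ _ := Le.trans

/-- The value of a word in a lattice. -/
def eval {L : Type w} [Lattice L] (f : X → L) : LatticeWord.{u, v} X → L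
  | var x => f x
  | sup a b => eval f a ⊔ eval f b
  | inf a b => eval f a ⊓ eval f b

theorem eval_mono {L : Type w} [Lattice L] (f : X → L) : Monotone (eval.{u, v} f) := by
  intro a b h
  induction h with
  | refl => exact le_rfl
  | trans _ _ hab hbc => exact hab.trans hbc
  | le_sup_left => exact le_sup_left
  | le_sup_right => exact le_sup_right
  | sup_le _ _ hac hbc => exact sup_le hac hbc
  | inf_le_left => exact inf_le_left
  | inf_le_right => exact inf_le_right
  | le_inf _ _ hab hac => exact le_inf hab hac

end LatticeWord

/-- The free lattice on `X`: lattice words up to equality in all lattices. -/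
def FreeLattice (X : Type u) : Type (max u v) :=
  Antisymmetrization (LatticeWord.{u, v} X) (· ≤ ·)

namespace FreeLattice

variable {X : Type u}

instance : PartialOrder (FreeLattice.{u, v} X) :=
  inferInstanceAs (PartialOrder (Antisymmetrization (LatticeWord.{u, v} X) (· ≤ ·)))

instance : Lattice (FreeLattice.{u, v} X) where
  sup := Quotient.map₂ .sup fun _ _ h _ _ h' =>
    ⟨.sup_le (h.1.trans (.le_sup_left _ _)) (h'.1.trans (.le_sup_right _ _)),
      .sup_le (h.2.trans (.le_sup_left _ _)) (h'.2.trans (.le_sup_right _ _))⟩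
  inf := Quotient.map₂ .inf fun _ _ h _ _ h' =>
    ⟨.le_inf (.trans (.inf_le_left _ _) h.1) (.trans (.inf_le_right _ _) h'.1),
      .le_inf (.trans (.inf_le_left _ _) h.2) (.trans (.inf_le_right _ _) h'.2)⟩
  le_sup_left := by rintro ⟨a⟩ ⟨b⟩; exact LatticeWord.Le.le_sup_left a b
  le_sup_right := by rintro ⟨a⟩ ⟨b⟩; exact LatticeWord.Le.le_sup_right a b
  sup_le := by rintro ⟨a⟩ ⟨b⟩ ⟨c⟩; exact LatticeWord.Le.sup_le
  inf_le_left := by rintro ⟨a⟩ ⟨b⟩; exact LatticeWord.Le.inf_le_left a b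
  inf_le_right := by rintro ⟨a⟩ ⟨b⟩; exact LatticeWord.Le.inf_le_right a b
  le_inf := by rintro ⟨a⟩ ⟨b⟩ ⟨c⟩; exact LatticeWord.Le.le_inf

/-- The generators of the free lattice. -/
def of (x : X) : FreeLattice.{u, v} X :=
  toAntisymmetrization (· ≤ ·) (.var x)

@[elab_as_elim]
theorem induction {P : FreeLattice.{u, v} X → Prop} (of : ∀ x, P (of x))
    (sup : ∀ a b, P a → P b → P (a ⊔ b)) (inf : ∀ a b, P a → P b → P (a ⊓ b))
    (a : FreeLattice.{u, v} X) : P a := by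
  obtain ⟨a⟩ := a
  induction a with
  | var x => exact of x
  | sup a b ha hb => exact sup _ _ ha hb
  | inf a b ha hb => exact inf _ _ ha hb

/-- The homomorphism extending a map defined on the generators. -/
def lift {L : Type w} [Lattice L] (f : X → L) : LatticeHom (FreeLattice.{u, v} X) L where
  toFun := Quotient.lift (LatticeWord.eval f) fun _ _ h =>
    le_antisymm (LatticeWord.eval_mono f h.1) (LatticeWord.eval_mono f h.2)
  map_sup' := by rintro ⟨a⟩ ⟨b⟩; rfl
  map_inf' := by rintro ⟨a⟩ ⟨b⟩; rfl

@[simp]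
theorem lift_of {L : Type w} [Lattice L] (f : X → L) (x : X) : lift f (of.{u, v} x) = f x :=
  rfl

theorem isFreeLatticeOn {Y : Type u'} (e : Y ≃ X) :
    IsFreeLatticeOn.{u', max u v, w} fun y => (of (e y) : FreeLattice.{u, v} X) := by
  intro L _ f
  refine ⟨lift (f ∘ e.symm), fun y => by simp, fun h hh => ?_⟩
  refine DFunLike.ext _ _ fun a => ?_
  induction a using FreeLattice.induction with
  | of x => simpa using hh (e.symm x)
  | sup a b ha hb => rw [map_sup, map_sup, ha, hb]
  | inf a b ha hb => rw [map_inf, map_inf, ha, hb]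

section TruthValues

variable {S : X → Prop} {a b : FreeLattice.{u, v} X}

theorem le_of_lift (hb : ∀ x, S x → b ≤ of x) (h : lift S a) : b ≤ a := by
  induction a using FreeLattice.induction with
  | of x => exact hb x h
  | sup a a' ha ha' =>
    rw [map_sup] at h
    exact h.elim (fun h => le_sup_of_le_left (ha h)) fun h => le_sup_of_le_right (ha' h)
  | inf a a' ha ha' =>
    rw [map_inf] at h
    exact le_inf (ha h.1) (ha' h.2)

theorem le_of_not_lift (hb : ∀ x, ¬ S x → of x ≤ b) (h : ¬ lift S a) : a ≤ b := by
  induction a using FreeLattice.induction with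
  | of x => exact hb x h
  | sup a a' ha ha' =>
    rw [map_sup] at h
    exact sup_le (ha fun h' => h (.inl h')) (ha' fun h' => h (.inr h'))
  | inf a a' ha ha' =>
    rw [map_inf] at h
    exact (not_and_or.1 h).elim (fun h => inf_le_of_left_le (ha h))
      fun h => inf_le_of_right_le (ha' h)

theorem lift_of_le (hab : a ≤ b) (ha : lift S a) : lift S b :=
  OrderHomClass.mono (lift S) hab ha

end TruthValues

theorem of_inf_of_le_iff {x y : X} {a : FreeLattice.{u, v} X} :
    of x ⊓ of y ≤ a ↔ lift (fun z => z = x ∨ z = y) a := by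
  refine ⟨fun h => lift_of_le h ?_, le_of_lift ?_⟩
  · rw [map_inf]
    exact ⟨.inl rfl, .inr rfl⟩
  · rintro _ (rfl | rfl)
    exacts [inf_le_left, inf_le_right]

theorem of_le_iff {x : X} {a : FreeLattice.{u, v} X} : of x ≤ a ↔ lift (fun y => y = x) a := by
  simpa only [inf_idem, or_self] using of_inf_of_le_iff (x := x) (y := x) (a := a)

theorem le_of_iff {x : X} {a : FreeLattice.{u, v} X} :
    a ≤ of x ↔ ¬ lift (fun y => y ≠ x) a :=
  ⟨fun h h' => lift_of_le h h' rfl, le_of_not_lift fun _ hy => (not_not.1 hy ▸ le_rfl)⟩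

theorem of_le_of_iff {x y : X} : (of x : FreeLattice.{u, v} X) ≤ of y ↔ x = y :=
  of_le_iff.trans eq_comm

theorem of_injective : Function.Injective (of : X → FreeLattice.{u, v} X) :=
  fun _ _ h => of_le_of_iff.1 h.le

theorem doublyPrime_iff [Nontrivial X] {a : FreeLattice.{u, v} X} :
    DoublyPrime a ↔ ∃ x, a = of x := by
  constructor
  · intro h
    induction a using FreeLattice.induction with
    | of x => exact ⟨x, rfl⟩
    | sup a b ha hb =>
      rcases h.1.supIrred.2 rfl with hab | hab <;> rw [← hab] at h ⊢
      exacts [ha h, hb h]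
    | inf a b ha hb =>
      rcases h.2.infIrred.2 rfl with hab | hab <;> rw [← hab] at h ⊢
      exacts [ha h, hb h]
  · rintro ⟨x, rfl⟩
    obtain ⟨y, hyx⟩ := exists_ne x
    refine ⟨⟨fun hmin => hyx ?_, fun b c => ?_⟩, fun hmax => hyx ?_, fun b c => ?_⟩
    · exact (of_le_of_iff.1 ((hmin inf_le_left).trans inf_le_right)).symm
    · rw [of_le_iff, of_le_iff, of_le_iff, map_sup]
      exact id
    · exact of_le_of_iff.1 (le_sup_right.trans (hmax le_sup_left))
    · rw [le_of_iff, le_of_iff, le_of_iff, map_inf]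
      exact not_and_or.1

theorem exists_inf_le_iff_adj [Finite X] (G : SimpleGraph X) (hG : G ≠ ⊥) :
    ∃ p : FreeLattice.{u, v} X, ∀ x y, of x ⊓ of y ≤ p ↔ G.Adj x y := by
  classical
  have := Fintype.ofFinite X
  let T : Finset (X × X) := {e | G.Adj e.1 e.2}
  have hT : T.Nonempty := by
    obtain ⟨x, y, hxy⟩ := G.ne_bot_iff_exists_adj.1 hG
    exact ⟨(x, y), Finset.mem_filter.2 ⟨Finset.mem_univ _, hxy⟩⟩
  refine ⟨T.sup' hT fun e => of e.1 ⊓ of e.2, fun x y => ⟨fun h => ?_, fun h => ?_⟩⟩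
  · contrapose! h
    rw [of_inf_of_le_iff]
    refine Finset.sup'_induction (p := fun a => ¬ lift (fun z => z = x ∨ z = y) a) hT _ ?_ ?_
    · intro a ha b hb
      rw [map_sup]
      exact not_or.2 ⟨ha, hb⟩
    · rintro ⟨a, b⟩ he
      rw [map_inf]
      change ¬ ((a = x ∨ a = y) ∧ (b = x ∨ b = y))
      have hab : G.Adj a b := (Finset.mem_filter.1 he).2
      rintro ⟨rfl | rfl, rfl | rfl⟩
      exacts [hab.ne rfl, h hab, h hab.symm, hab.ne rfl]
  · exact Finset.le_sup' (fun e : X × X => (of e.1 ⊓ of e.2 : FreeLattice.{u, v} X))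
      (b := (x, y)) (Finset.mem_filter.2 ⟨Finset.mem_univ _, h⟩)

/-- The bipartite graph of a relation, used to code relations by lattice elements. -/
def bipartiteGraph {A B : Type*} (r : A → B → Prop) : SimpleGraph (A ⊕ B) where
  Adj
    | .inl a, .inr b => r a b
    | .inr b, .inl a => r a b
    | _, _ => False
  symm := ⟨by rintro (a | b) (a' | b') h <;> exact h⟩
  loopless := ⟨by rintro (a | b) h <;> exact h⟩

theorem bipartiteGraph_ne_bot {A B : Type*} {r : A → B → Prop} {a : A} {b : B} (h : r a b) :
    bipartiteGraph r ≠ ⊥ :=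
  SimpleGraph.ne_bot_iff_exists_adj.2 ⟨.inl a, .inr b, h⟩

-- The letter `some b` is the copy of `b`, and the spare letter `none` ensures that the graph coding
-- `R` has an edge even if `R` is empty.
theorem exists_link (A : Type u) [Finite A] [Nonempty A] :
    ∃ link : FreeLattice.{u, v} (A ⊕ Option A), ∀ R : A → A → Prop, ∃ p,
      ∀ c : Coding (FreeLattice (A ⊕ Option A)), c.link = link →
        ∀ a z, c.Rel p (of (.inl a)) z ↔ ∃ b, z = of (.inl b) ∧ R a b := by
  have a₀ := Classical.arbitrary A
  obtain ⟨link, hlink⟩ := exists_inf_le_iff_adj (bipartiteGraph fun (a : A) b => b = some a)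
    (bipartiteGraph_ne_bot (a := a₀) rfl)
  refine ⟨link, fun R => ?_⟩
  obtain ⟨p, hp⟩ := exists_inf_le_iff_adj (bipartiteGraph fun a b => ∀ b' ∈ b, R a b')
    (bipartiteGraph_ne_bot (a := a₀) (b := none) (by simp))
  refine ⟨p, ?_⟩
  rintro c rfl a z
  have : Nontrivial (A ⊕ Option A) := ⟨.inl a₀, .inr none, Sum.inl_ne_inr⟩
  constructor
  · rintro ⟨-, hz, w, hw, hpw, hwz⟩
    obtain ⟨z, rfl⟩ := doublyPrime_iff.1 hz
    obtain ⟨w, rfl⟩ := doublyPrime_iff.1 hw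
    rw [hp] at hpw
    rw [hlink] at hwz
    rcases w with _ | w
    · exact hpw.elim
    rcases z with b | _
    · exact ⟨b, rfl, hpw b hwz⟩
    · exact hwz.elim
  · rintro ⟨b, rfl, hab⟩
    have hcopy : ∀ b' ∈ some b, R a b' := by simpa using hab
    exact ⟨doublyPrime_iff.2 ⟨_, rfl⟩, doublyPrime_iff.2 ⟨_, rfl⟩, of (.inr (some b)),
      doublyPrime_iff.2 ⟨_, rfl⟩, (hp _ _).2 hcopy, (hlink _ _).2 rfl⟩

theorem exists_isStandard (N : ℕ) :
    ∃ (c : Coding (FreeLattice.{0, v} (Fin (N + 1) ⊕ Option (Fin (N + 1))))) (g : ℕ → _),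
      c.IsStandard N g := by
  obtain ⟨link, hlink⟩ := exists_link.{0, v} (Fin (N + 1))
  obtain ⟨lt, hlt⟩ := hlink (· < ·)
  let g (i : ℕ) : FreeLattice.{0, v} (Fin (N + 1) ⊕ Option (Fin (N + 1))) :=
    of (.inl (Fin.ofNat (N + 1) i))
  let c : Coding (FreeLattice.{0, v} (Fin (N + 1) ⊕ Option (Fin (N + 1)))) := ⟨lt, link, g 0⟩
  have val_ofNat {i : ℕ} (hi : i ≤ N) : (Fin.ofNat (N + 1) i : ℕ) = i :=
    Nat.mod_eq_of_lt (Nat.lt_succ_of_le hi)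
  have codesOn {R : ℕ → ℕ → Prop} {p} (hp : ∀ a z, c.Rel p (of (.inl a)) z ↔
      ∃ b : Fin (N + 1), z = of (.inl b) ∧ R a b) : c.CodesOn N g p R := by
    intro i hi z
    rw [hp, val_ofNat hi]
    constructor
    · rintro ⟨b, rfl, hR⟩
      exact ⟨b, Nat.le_of_lt_succ b.2, by simp [g], hR⟩
    · rintro ⟨j, hj, rfl, hR⟩
      exact ⟨Fin.ofNat (N + 1) j, rfl, by rwa [val_ofNat hj]⟩
  refine ⟨c, g, rfl, fun i hi j hj hij => ?_, codesOn (hlt c rfl), fun R => ?_⟩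
  · rw [← val_ofNat hi, ← val_ofNat hj, Sum.inl_injective (of_injective hij)]
  · obtain ⟨p, hp⟩ := hlink fun a b => R a b
    exact ⟨p, codesOn (hp c rfl)⟩

end FreeLattice

theorem finite_supPrime {X : Type u} {F : Type v} [Lattice F] [Finite X] {ι : X → F}
    (h : IsFreeLatticeOn.{u, v, w} ι) : {a : F | SupPrime a}.Finite := by
  let hom (a : {a : F | SupPrime a}) : LatticeHom F (ULift.{w} Prop) :=
    { toFun b := ⟨a.1 ≤ b⟩
      map_sup' _ _ := ULift.ext _ _ <| propext a.2.le_sup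
      map_inf' _ _ := ULift.ext _ _ <| propext le_inf_iff }
  have hom_ext {a b : {a : F | SupPrime a}} (hab : ∀ x, hom a (ι x) = hom b (ι x)) :
      hom a = hom b :=
    (h _ fun x => hom b (ι x)).unique hab fun _ => rfl
  have hom_injective : Function.Injective fun a x => hom a (ι x) := by
    intro a b hab
    have hle (c : F) : a.1 ≤ c ↔ b.1 ≤ c :=
      iff_of_eq (congrArg ULift.down (DFunLike.congr_fun (hom_ext (congrFun hab)) c))
    exact Subtype.ext (eq_of_forall_ge_iff hle)
  exact Finite.of_injective _ hom_injective

/-! ### Uniform definability -/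

/-- A predicate on tuples of elements of lattices is uniformly definable if a single first-order
formula in the language of posets defines it in all lattices. -/
def UniformlyDefinable {α : Type} (P : ∀ (F : Type v) [Lattice F], (α → F) → Prop) : Prop :=
  ∃ φ : Language.order.Formula α, ∀ (F : Type v) [Lattice F] (e : α → F), φ.Realize e ↔ P F e

namespace UniformlyDefinable

variable {α : Type} {P Q : ∀ (F : Type v) [Lattice F], (α → F) → Prop}

theorem congr (h : UniformlyDefinable P)
    (hPQ : ∀ (F : Type v) [Lattice F] (e : α → F), P F e ↔ Q F e) : UniformlyDefinable Q := by
  obtain ⟨φ, hφ⟩ := h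
  exact ⟨φ, fun F _ e => (hφ F e).trans (hPQ F e)⟩

theorem le (a b : α) : UniformlyDefinable fun (_F : Type v) _ e => e a ≤ e b :=
  ⟨Language.order.leSymb.formula₂ (Term.var a) (Term.var b), fun F _ e => by
    rw [Formula.realize_rel₂]; rfl⟩

theorem eq (a b : α) : UniformlyDefinable fun (_F : Type v) _ e => e a = e b :=
  ⟨(Term.var a).equal (Term.var b), fun F _ e => by
    rw [Formula.realize_equal]; rfl⟩

theorem not (hP : UniformlyDefinable P) : UniformlyDefinable fun F _ e => ¬ P F e := by
  obtain ⟨φ, hφ⟩ := hP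
  exact ⟨φ.not, fun F _ e => (Formula.realize_not).trans (not_congr (hφ F e))⟩

theorem imp (hP : UniformlyDefinable P) (hQ : UniformlyDefinable Q) :
    UniformlyDefinable fun F _ e => P F e → Q F e := by
  obtain ⟨φ, hφ⟩ := hP
  obtain ⟨ψ, hψ⟩ := hQ
  exact ⟨φ.imp ψ, fun F _ e => (Formula.realize_imp).trans (imp_congr (hφ F e) (hψ F e))⟩

theorem and (hP : UniformlyDefinable P) (hQ : UniformlyDefinable Q) :
    UniformlyDefinable fun F _ e => P F e ∧ Q F e :=
  (hP.imp hQ.not).not.congr fun F _ e => by tauto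

theorem or (hP : UniformlyDefinable P) (hQ : UniformlyDefinable Q) :
    UniformlyDefinable fun F _ e => P F e ∨ Q F e :=
  (hP.not.imp hQ).congr fun F _ e => by tauto

theorem exs {β : Type} [Finite β] {Q : ∀ (F : Type v) [Lattice F], (α → F) → (β → F) → Prop}
    (hQ : UniformlyDefinable fun F _ (e : α ⊕ β → F) =>
      Q F (fun a => e (.inl a)) fun b => e (.inr b)) :
    UniformlyDefinable fun F _ e => ∃ x, Q F e x := by
  obtain ⟨φ, hφ⟩ := hQ
  exact ⟨φ.iExs β, fun F _ e => (Formula.realize_iExs).trans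
    (exists_congr fun x => hφ F (Sum.elim e x))⟩

section Quantifiers

variable {Q : ∀ (F : Type v) [Lattice F], (α → F) → F → Prop}
  (hQ : UniformlyDefinable fun F _ (e : α ⊕ Unit → F) => Q F (fun a => e (.inl a)) (e (.inr ())))
include hQ

theorem ex : UniformlyDefinable fun F _ e => ∃ x, Q F e x :=
  (exs (Q := fun F _ e x => Q F e (x ())) hQ).congr fun _ _ _ =>
    ⟨fun ⟨_, hx⟩ => ⟨_, hx⟩, fun ⟨x, hx⟩ => ⟨fun _ => x, hx⟩⟩

theorem all : UniformlyDefinable fun F _ e => ∀ x, Q F e x :=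
  (ex (Q := fun F _ e x => ¬ Q F e x) hQ.not).not.congr fun _ _ _ => not_exists_not

end Quantifiers

theorem forall_finite {β : Type} [Finite β] {Q : β → ∀ (F : Type v) [Lattice F], (α → F) → Prop}
    (hQ : ∀ b, UniformlyDefinable (Q b)) : UniformlyDefinable fun F _ e => ∀ b, Q b F e := by
  choose φ hφ using hQ
  exact ⟨Formula.iInf φ, fun F _ e => (Formula.realize_iInf).trans
    (forall_congr' fun b => hφ b F e)⟩

theorem inf_le (a b c : α) : UniformlyDefinable fun (_F : Type v) _ e => e a ⊓ e b ≤ e c :=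
  (all (Q := fun _ _ e x => x ≤ e a → x ≤ e b → x ≤ e c)
    ((le _ _).imp ((le _ _).imp (le _ _)))).congr fun _ _ _ =>
      ⟨fun h => h _ inf_le_left inf_le_right, fun h _ ha hb => (le_inf ha hb).trans h⟩

theorem le_sup (a b c : α) : UniformlyDefinable fun (_F : Type v) _ e => e a ≤ e b ⊔ e c :=
  (all (Q := fun _ _ e x => e b ≤ x → e c ≤ x → e a ≤ x)
    ((le _ _).imp ((le _ _).imp (le _ _)))).congr fun _ _ _ =>
      ⟨fun h => h _ le_sup_left le_sup_right, fun h _ hb hc => h.trans (sup_le hb hc)⟩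

theorem supPrime (a : α) : UniformlyDefinable fun (_F : Type v) _ e => SupPrime (e a) :=
  and (not (all (imp (le _ _) (le _ _)))) (all (all ((le_sup _ _ _).imp ((le _ _).or (le _ _)))))

theorem infPrime (a : α) : UniformlyDefinable fun (_F : Type v) _ e => InfPrime (e a) :=
  and (not (all (imp (le _ _) (le _ _)))) (all (all ((inf_le _ _ _).imp ((le _ _).or (le _ _)))))

theorem doublyPrime (a : α) : UniformlyDefinable fun (_F : Type v) _ e => DoublyPrime (e a) :=
  and (supPrime a) (infPrime a)

section Coding

variable (c : Coding α)

theorem rel (p a b : α) :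
    UniformlyDefinable fun (_F : Type v) _ e => (c.map e).Rel (e p) (e a) (e b) :=
  and (doublyPrime _) (and (doublyPrime _)
    (ex (and (doublyPrime _) (and (inf_le _ _ _) (inf_le _ _ (Sum.inl c.link))))))

theorem isNumber (x : α) : UniformlyDefinable fun (_F : Type v) _ e => (c.map e).IsNumber (e x) :=
  or (eq _ c.zero) (rel c _ _ _)

theorem lt (x y : α) : UniformlyDefinable fun (_F : Type v) _ e => (c.map e).Lt (e x) (e y) :=
  and (isNumber c _) (and (isNumber c _) (rel c _ _ _))

theorem isSucc (x y : α) :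
    UniformlyDefinable fun (_F : Type v) _ e => (c.map e).IsSucc (e x) (e y) :=
  and (lt c _ _) (not (ex (and (lt (c.map Sum.inl) _ _) (lt (c.map Sum.inl) _ _))))

theorem isStrictOrder :
    UniformlyDefinable fun (F : Type v) _ e => IsStrictOrder F (c.map e).Lt := by
  let c₁ := c.map (Sum.inl (β := Unit))
  let c₃ := (c₁.map (Sum.inl (β := Unit))).map (Sum.inl (β := Unit))
  have irrefl : UniformlyDefinable fun (F : Type v) _ e => ∀ x : F, ¬ (c.map e).Lt x x :=
    all (not (lt c₁ _ _))
  have trans : UniformlyDefinable fun (F : Type v) _ e =>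
      ∀ x y z : F, (c.map e).Lt x y → (c.map e).Lt y z → (c.map e).Lt x z :=
    all (all (all ((lt c₃ _ _).imp ((lt c₃ _ _).imp (lt c₃ _ _)))))
  refine (irrefl.and trans).congr fun F _ e => ?_
  exact ⟨fun h => { irrefl := h.1, trans := h.2 }, fun h => ⟨h.irrefl, h.trans⟩⟩

end Coding

end UniformlyDefinable

/-! ### Partial recursive functions are expressible -/

open Filter Matrix

theorem comp_vecCons {α β : Type*} {k : ℕ} (e : α → β) (a : α) (x : Fin k → α) :
    e ∘ vecCons a x = vecCons (e a) (e ∘ x) :=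
  Fin.comp_cons e a x

theorem comp_get_cons {α β : Type*} {k : ℕ} (e : α → β) (a : α) (v : List.Vector α k) :
    e ∘ (a ::ᵥ v).get = vecCons (e a) (e ∘ v.get) :=
  funext fun i => by cases i using Fin.cases <;> simp

theorem mem_mOfFn_iff {α : Type*} {k : ℕ} {f : Fin k → Part α} {v : List.Vector α k} :
    v ∈ List.Vector.mOfFn f ↔ ∀ i, v.get i ∈ f i := by
  induction k with
  | zero => simp [List.Vector.mOfFn, Subsingleton.elim v List.Vector.nil]
  | succ k ih =>
    obtain ⟨a, v, rfl⟩ := v.exists_eq_cons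
    simp only [List.Vector.mOfFn, Part.bind_eq_bind, Part.mem_bind_iff, Part.pure_eq_some,
      Part.mem_some_iff, Fin.forall_fin_succ, List.Vector.get_zero, List.Vector.head_cons,
      List.Vector.get_cons_succ, ← ih]
    constructor
    · rintro ⟨b, hb, w, hw, h⟩
      obtain ⟨rfl, rfl⟩ := (List.Vector.eq_cons_iff _ _ _).1 h
      exact ⟨hb, hw⟩
    · rintro ⟨ha, hv⟩
      exact ⟨a, ha, v, hv, rfl⟩

theorem Coding.represents_vecCons {F : Type*} [Lattice F] {c : Coding F} {k a : ℕ}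
    {v : List.Vector ℕ k} {b : F} {x : Fin k → F} (ha : c.Represents a b)
    (hv : ∀ i, c.Represents (v.get i) (x i)) (i : Fin (k + 1)) :
    c.Represents ((a ::ᵥ v).get i) (vecCons b x i) := by
  cases i using Fin.cases with
  | zero => simpa using ha
  | succ i => simpa using hv i

/-- A relation between `k` inputs and an output, available in every lattice with a coding. -/
abbrev CodedRel (k : ℕ) : Type (v + 1) :=
  ∀ (F : Type v) [Lattice F], Coding F → (Fin k → F) → F → Prop

/-- A uniformly definable relation expresses a partial function on the natural numbers if it is
sound for its graph whenever the order is strict and there are finitely many individuals, and holds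
on its graph in all long enough standard segments. -/
structure Expresses {k : ℕ} (R : CodedRel.{v} k) (f : List.Vector ℕ k →. ℕ) : Prop where
  definable : ∀ {β : Type} (c : Coding β) (x : Fin k → β) (y : β),
    UniformlyDefinable fun F _ e => R F (c.map e) (e ∘ x) (e y)
  sound : ∀ {F : Type v} [Lattice F] [Finite {a : F // DoublyPrime a}] {c : Coding F}
    [IsStrictOrder F c.Lt] {n : List.Vector ℕ k} {x : Fin k → F} {y : F},
    (∀ i, c.Represents (n.get i) (x i)) → R F c x y → ∃ m ∈ f n, c.Represents m y
  complete : ∀ {n : List.Vector ℕ k} {m : ℕ}, m ∈ f n →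
    ∀ᶠ N in atTop, ∀ (F : Type v) [Lattice F] (c : Coding F) (g : ℕ → F),
      c.IsStandard N g → R F c (g ∘ n.get) (g m)

/-- A partial function that is expressed by some relation. -/
def Expressible {k : ℕ} (f : List.Vector ℕ k →. ℕ) : Prop :=
  ∃ R : CodedRel.{v} k, Expresses R f

theorem Expresses.represents {k : ℕ} {R : CodedRel.{v} k} {f : List.Vector ℕ k → ℕ}
    (h : Expresses R fun n => Part.some (f n)) {F : Type v} [Lattice F]
    [Finite {a : F // DoublyPrime a}] {c : Coding F} [IsStrictOrder F c.Lt] {n : List.Vector ℕ k}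
    {x : Fin k → F} {y : F} (hx : ∀ i, c.Represents (n.get i) (x i)) (hy : R F c x y) :
    c.Represents (f n) y := by
  obtain ⟨m, hm, hmy⟩ := h.sound hx hy
  rwa [Part.mem_some_iff.1 hm] at hmy

theorem Expressible.zero : Expressible.{v} fun _ : List.Vector ℕ 0 => Part.some 0 :=
  ⟨fun _ _ c _ y => y = c.zero,
    { definable c _ y := .eq y c.zero
      sound _ hy := ⟨0, Part.mem_some 0, hy⟩
      complete hm := .of_forall fun N F _ c g hg => by rw [Part.mem_some_iff.1 hm, hg.zero] }⟩

theorem Expressible.succ : Expressible.{v} fun v : List.Vector ℕ 1 => Part.some v.head.succ :=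
  ⟨fun _ _ c x y => c.IsSucc (x 0) y,
    { definable c _ _ := .isSucc c _ _
      sound {F _ _ c _ n x y} hx hy := ⟨_, Part.mem_some _, x 0, hy, by simpa using hx 0⟩
      complete {n m} hm := by
        filter_upwards [eventually_ge_atTop (n.head + 1)] with N hN F _ c g hg
        rw [Part.mem_some_iff.1 hm]
        exact hg.isSucc_iff.2 ⟨n.head, hN, by simp, rfl⟩ }⟩

theorem Expressible.get {k : ℕ} (i : Fin k) :
    Expressible.{v} fun v : List.Vector ℕ k => Part.some (v.get i) :=
  ⟨fun _ _ _ x y => y = x i,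
    { definable _ _ _ := .eq _ _
      sound hx hy := ⟨_, Part.mem_some _, hy ▸ hx i⟩
      complete hm := .of_forall fun N F _ c g _ => by
        rw [Part.mem_some_iff.1 hm, Function.comp_apply] }⟩

theorem Expressible.comp {m k : ℕ} {f : List.Vector ℕ k →. ℕ} {g : Fin k → List.Vector ℕ m →. ℕ}
    (hf : Expressible.{v} f) (hg : ∀ i, Expressible.{v} (g i)) :
    Expressible.{v} fun v => (List.Vector.mOfFn fun i => g i v) >>= f := by
  obtain ⟨A, hA⟩ := hf
  choose B hB using hg
  refine ⟨fun F _ c x y => ∃ z : Fin k → F, (∀ i, B i F c x (z i)) ∧ A F c z y,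
    fun c x y => .exs (.and
      (.forall_finite fun i => (hB i).definable (c.map Sum.inl) (Sum.inl ∘ x) _)
      (hA.definable (c.map Sum.inl) _ _)), ?_, ?_⟩
  · rintro F _ _ c _ n x y hx ⟨z, hz, hy⟩
    choose r hr hrz using fun i => (hB i).sound hx (hz i)
    obtain ⟨l, hl, hly⟩ := hA.sound (n := List.Vector.ofFn r) (by simpa using hrz) hy
    refine ⟨l, Part.mem_bind (a := List.Vector.ofFn r) ?_ hl, hly⟩
    simpa [mem_mOfFn_iff] using hr
  · intro n l hl
    obtain ⟨r, hr, hl⟩ := Part.mem_bind_iff.1 hl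
    rw [mem_mOfFn_iff] at hr
    filter_upwards [hA.complete hl, eventually_all.2 fun i => (hB i).complete (hr i)]
      with N hAN hBN F _ c e he
    exact ⟨e ∘ r.get, fun i => hBN i F c e he, hAN F c e he⟩

section PrimitiveRecursion

/-- The function of one variable defined by primitive recursion with parameters `n`. -/
def primRec {k : ℕ} (f : List.Vector ℕ k → ℕ) (g : List.Vector ℕ (k + 2) → ℕ)
    (n : List.Vector ℕ k) (j : ℕ) : ℕ :=
  j.rec (f n) fun i r => g (i ::ᵥ r ::ᵥ n)

/-- The relation coded by `p` satisfies the recursion equations, where `A` describes the initial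
value, `B` the recursion step, and `x` the parameters. -/
def IsRecursionTable {k : ℕ} (A : CodedRel.{v} k) (B : CodedRel.{v} (k + 2)) {F : Type v}
    [Lattice F] (c : Coding F) (x : Fin k → F) (p : F) : Prop :=
  (∀ z, c.Rel p c.zero z → A F c x z) ∧
    ∀ a b z, c.IsSucc a b → c.Rel p b z → ∃ w, c.Rel p a w ∧ B F c (vecCons a (vecCons w x)) z

variable {k : ℕ} {A : CodedRel.{v} k} {B : CodedRel.{v} (k + 2)} {f : List.Vector ℕ k → ℕ}
  {g : List.Vector ℕ (k + 2) → ℕ} (hA : Expresses A fun n => Part.some (f n))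
  (hB : Expresses B fun n => Part.some (g n))
include hA hB

theorem uniformlyDefinable_isRecursionTable {β : Type} (c : Coding β) (x : Fin k → β) (p : β) :
    UniformlyDefinable fun F _ e => IsRecursionTable A B (F := F) (c.map e) (e ∘ x) (e p) := by
  let c₁ := c.map (Sum.inl (β := Unit))
  let c₃ := (c₁.map (Sum.inl (β := Unit))).map (Sum.inl (β := Unit))
  let c₄ := c₃.map (Sum.inl (β := Unit))
  refine .and (.all (.imp (.rel c₁ _ (.inl c.zero) _) (hA.definable c₁ (Sum.inl ∘ x) _)))
    (.all (.all (.all (.imp (.isSucc c₃ _ _) (.imp (.rel c₃ _ _ _)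
      (.ex (.and (.rel c₄ _ _ _) ?_)))))))
  refine (hB.definable c₄ (vecCons (.inl (.inl (.inl (.inr ())))) (vecCons (.inr ())
    fun i => .inl (.inl (.inl (.inl (x i)))))) (.inl (.inr ()))).congr fun F _ e => ?_
  rw [comp_vecCons, comp_vecCons]
  rfl

theorem IsRecursionTable.represents {F : Type v} [Lattice F] [Finite {a : F // DoublyPrime a}]
    {c : Coding F} [IsStrictOrder F c.Lt] {n : List.Vector ℕ k} {x : Fin k → F} {p : F}
    (hp : IsRecursionTable A B c x p) (hx : ∀ i, c.Represents (n.get i) (x i)) {j : ℕ} {a z : F}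
    (ha : c.Represents j a) (hz : c.Rel p a z) : c.Represents (primRec f g n j) z := by
  induction j generalizing a z with
  | zero =>
    obtain rfl : a = c.zero := ha
    exact hA.represents hx (hp.1 z hz)
  | succ j ih =>
    obtain ⟨b, hba, hb⟩ := ha
    obtain ⟨w, hw, hBz⟩ := hp.2 b a z hba hz
    exact hB.represents (c.represents_vecCons hb (c.represents_vecCons (ih hb hw) hx)) hBz

theorem eventually_exists_isRecursionTable (n : List.Vector ℕ k) (m : ℕ) :
    ∀ᶠ N in atTop, ∀ (F : Type v) [Lattice F] (c : Coding F) (e : ℕ → F), c.IsStandard N e →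
      ∃ p, IsRecursionTable A B c (e ∘ n.get) p ∧ c.Rel p (e m) (e (primRec f g n m)) := by
  have hstep : ∀ᶠ N in atTop, ∀ j < m, ∀ (F : Type v) [Lattice F] (c : Coding F) (e : ℕ → F),
      c.IsStandard N e → B F c (e ∘ (j ::ᵥ primRec f g n j ::ᵥ n).get)
        (e (primRec f g n (j + 1))) :=
    (Set.finite_lt_nat m).eventually_all.2 fun j _ => hB.complete (Part.mem_some _)
  have hbound : ∀ᶠ N in atTop, ∀ j ≤ m, j ≤ N ∧ primRec f g n j ≤ N :=
    (Set.finite_le_nat m).eventually_all.2 fun j _ =>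
      (eventually_ge_atTop j).and (eventually_ge_atTop _)
  filter_upwards [hA.complete (n := n) (Part.mem_some _), hstep, hbound]
    with N hAN hstep hbound F _ c e he
  obtain ⟨p, hp⟩ := he.exists_codesOn fun i j => i ≤ m ∧ j = primRec f g n i
  have hrel {i : ℕ} (hi : i ≤ m) : c.Rel p (e i) (e (primRec f g n i)) :=
    (hp i (hbound i hi).1 _).2 ⟨_, (hbound i hi).2, rfl, hi, rfl⟩
  refine ⟨p, ⟨fun z hz => ?_, fun a b z hab hz => ?_⟩, hrel le_rfl⟩
  · rw [← he.zero] at hz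
    obtain ⟨_, -, rfl, -, rfl⟩ := (hp 0 (Nat.zero_le N) z).1 hz
    exact hAN F c e he
  · obtain ⟨i, hi, rfl, rfl⟩ := he.isSucc_iff.1 hab
    obtain ⟨_, -, rfl, him, rfl⟩ := (hp _ hi z).1 hz
    refine ⟨e (primRec f g n i), hrel (Nat.le_of_succ_le him), ?_⟩
    simpa only [comp_get_cons] using hstep i him F c e he

omit hA hB in
theorem Expressible.prec (hf : Expressible.{v} fun v => Part.some (f v))
    (hg : Expressible.{v} fun v => Part.some (g v)) :
    Expressible.{v} fun v : List.Vector ℕ (k + 1) => Part.some (primRec f g v.tail v.head) := by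
  obtain ⟨A, hA⟩ := hf
  obtain ⟨B, hB⟩ := hg
  refine ⟨fun F _ c x y => ∃ p, IsRecursionTable A B c (x ∘ Fin.succ) p ∧ c.Rel p (x 0) y,
    fun c x y => .ex (.and (uniformlyDefinable_isRecursionTable hA hB (c.map Sum.inl)
      (Sum.inl ∘ x ∘ Fin.succ) _) (.rel (c.map Sum.inl) _ _ _)), ?_, ?_⟩
  · rintro F _ _ c _ n x y hx ⟨p, hp, hy⟩
    have htail (i : Fin k) : c.Represents (n.tail.get i) (x i.succ) := by
      simpa using hx i.succ
    have hhead : c.Represents n.head (x 0) := by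
      simpa using hx 0
    exact ⟨_, Part.mem_some _, hp.represents hA hB htail hhead hy⟩
  · intro n m hm
    rw [Part.mem_some_iff.1 hm]
    obtain ⟨a, n, rfl⟩ := n.exists_eq_cons
    filter_upwards [eventually_exists_isRecursionTable hA hB n a] with N hN F _ c e he
    rw [comp_get_cons]
    exact hN F c e he

end PrimitiveRecursion

section Minimization

/-- The number `y` is the least one at which `A` holds with output zero, where all smaller numbers
have a nonzero output. -/
def IsLeastZero {k : ℕ} (A : CodedRel.{v} (k + 1)) {F : Type v} [Lattice F] (c : Coding F)
    (x : Fin k → F) (y : F) : Prop :=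
  c.IsNumber y ∧ A F c (vecCons y x) c.zero ∧
    ∀ a, c.Lt a y → ∃ z, A F c (vecCons a x) z ∧ z ≠ c.zero

variable {k : ℕ} {A : CodedRel.{v} (k + 1)} {f : List.Vector ℕ (k + 1) → ℕ}
  (hA : Expresses A fun n => Part.some (f n))
include hA

theorem uniformlyDefinable_isLeastZero {β : Type} (c : Coding β) (x : Fin k → β) (y : β) :
    UniformlyDefinable fun F _ e => IsLeastZero A (F := F) (c.map e) (e ∘ x) (e y) := by
  let c₁ := c.map (Sum.inl (β := Unit))
  let c₂ := c₁.map (Sum.inl (β := Unit))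
  refine .and (.isNumber c _) (.and ?_ (.all (.imp (.lt c₁ _ _)
    (.ex (.and ?_ (.not (.eq _ c₂.zero)))))))
  · refine (hA.definable c (vecCons y x) c.zero).congr fun F _ e => ?_
    rw [comp_vecCons]
    rfl
  · refine (hA.definable c₂ (vecCons (.inl (.inr ())) fun i => .inl (.inl (x i)))
      (.inr ())).congr fun F _ e => ?_
    rw [comp_vecCons]
    rfl

theorem IsLeastZero.exists_mem_rfind {F : Type v} [Lattice F] [Finite {a : F // DoublyPrime a}]
    {c : Coding F} [IsStrictOrder F c.Lt] {n : List.Vector ℕ k} {x : Fin k → F} {y : F}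
    (hy : IsLeastZero A c x y) (hx : ∀ i, c.Represents (n.get i) (x i)) :
    ∃ m ∈ Nat.rfind fun m => Part.some (decide (f (m ::ᵥ n) = 0)), c.Represents m y := by
  obtain ⟨hynum, hzero, hlt⟩ := hy
  obtain ⟨m, hm⟩ := hynum.exists_represents
  refine ⟨m, Nat.mem_rfind.2 ⟨?_, fun {j} hj => ?_⟩, hm⟩
  · have : f (m ::ᵥ n) = 0 :=
      c.eq_zero_of_represents_zero (hA.represents (c.represents_vecCons hm hx) hzero)
    simp [this]
  · obtain ⟨a, ha, hay⟩ := hm.exists_lt hj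
    obtain ⟨z, hz, hz0⟩ := hlt a hay
    have hfz := hA.represents (c.represents_vecCons ha hx) hz
    have : f (j ::ᵥ n) ≠ 0 := fun h => hz0 (by rwa [h] at hfz)
    simp [this]

theorem eventually_isLeastZero {n : List.Vector ℕ k} {m : ℕ}
    (hm : m ∈ Nat.rfind fun m => Part.some (decide (f (m ::ᵥ n) = 0))) :
    ∀ᶠ N in atTop, ∀ (F : Type v) [Lattice F] (c : Coding F) (e : ℕ → F), c.IsStandard N e →
      IsLeastZero A c (e ∘ n.get) (e m) := by
  have hzero : f (m ::ᵥ n) = 0 := by simpa using (Nat.mem_rfind.1 hm).1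
  have hne {j : ℕ} (hj : j < m) : f (j ::ᵥ n) ≠ 0 := by simpa using (Nat.mem_rfind.1 hm).2 hj
  have hlt : ∀ᶠ N in atTop, ∀ j < m, f (j ::ᵥ n) ≤ N ∧ ∀ (F : Type v) [Lattice F] (c : Coding F)
      (e : ℕ → F), c.IsStandard N e → A F c (e ∘ (j ::ᵥ n).get) (e (f (j ::ᵥ n))) :=
    (Set.finite_lt_nat m).eventually_all.2 fun j _ =>
      (eventually_ge_atTop _).and (hA.complete (Part.mem_some _))
  filter_upwards [hA.complete (n := m ::ᵥ n) (Part.mem_some _), hlt, eventually_ge_atTop m]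
    with N hAm hlt hmN F _ c e he
  refine ⟨he.isNumber_iff.2 ⟨m, hmN, rfl⟩, ?_, fun a ha => ?_⟩
  · simpa only [comp_get_cons, hzero, he.zero] using hAm F c e he
  · obtain ⟨j, m', hj, hm', rfl, hmm'⟩ := he.lt_iff.1 ha
    obtain rfl := he.injOn hmN hm' hmm'
    obtain ⟨hN, hAj⟩ := hlt j hj
    refine ⟨e (f (j ::ᵥ n)), by simpa only [comp_get_cons] using hAj F c e he, fun h => ?_⟩
    exact hne hj (he.injOn hN (Nat.zero_le N) (h.trans he.zero.symm))

omit hA in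
theorem Expressible.rfind (hf : Expressible.{v} fun v => Part.some (f v)) :
    Expressible.{v} fun v : List.Vector ℕ k =>
      Nat.rfind fun n => Part.some (decide (f (n ::ᵥ v) = 0)) := by
  obtain ⟨A, hA⟩ := hf
  exact ⟨fun _ _ => IsLeastZero A,
    { definable := uniformlyDefinable_isLeastZero hA
      sound hx hy := hy.exists_mem_rfind hA hx
      complete := eventually_isLeastZero hA }⟩

end Minimization

theorem expressible_of_primrec' {k : ℕ} {f : List.Vector ℕ k → ℕ} (hf : Nat.Primrec' f) :
    Expressible.{v} fun v => Part.some (f v) := by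
  induction hf with
  | zero => exact .zero
  | succ => exact .succ
  | get i => exact .get i
  | comp g _ _ hf hg =>
    simpa [Vector.mOfFn_part_some] using Expressible.comp hf hg
  | prec _ _ hf hg => exact .prec hf hg

theorem expressible_of_partrec' {k : ℕ} {f : List.Vector ℕ k →. ℕ} (hf : Nat.Partrec' f) :
    Expressible.{v} f := by
  induction hf with
  | prim hf => exact expressible_of_primrec' hf
  | comp g _ _ hf hg => exact .comp hf hg
  | rfind _ hf => exact .rfind hf

/-! ### Codes of formulas -/

/-- The symbols of which formulas with bound variables only consist. -/
abbrev Symbol : Type :=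
  (Σ k, Language.order.Term (Empty ⊕ Fin k)) ⊕ ((Σ n, Language.order.Relations n) ⊕ ℕ)

/-- The codes of the symbols of a formula, in order; the Gödel number of a sentence is the code of
this list. -/
def symbolCodes {n : ℕ} (φ : Language.order.BoundedFormula Empty n) : List ℕ :=
  φ.listEncode.map Encodable.encode

theorem encode_map_encode {α : Type*} [Encodable α] (l : List α) :
    Encodable.encode (l.map Encodable.encode) = Encodable.encode l := by
  induction l with
  | nil => rfl
  | cons a l ih => simp [ih]

theorem encode_sentence (φ : Language.order.Sentence) :
    Encodable.encode φ = Encodable.encode (symbolCodes (n := 0) φ) :=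
  (encode_map_encode _).symm

theorem symbolCodes_imp {n : ℕ} (φ ψ : Language.order.BoundedFormula Empty n) :
    symbolCodes (φ.imp ψ) =
      Encodable.encode (Sum.inr (Sum.inr 0) : Symbol) :: (symbolCodes φ ++ symbolCodes ψ) := by
  simp [symbolCodes, BoundedFormula.listEncode]

theorem symbolCodes_all {n : ℕ} (φ : Language.order.BoundedFormula Empty (n + 1)) :
    symbolCodes φ.all = Encodable.encode (Sum.inr (Sum.inr 1) : Symbol) :: symbolCodes φ :=
  rfl

theorem symbolCodes_alls {n : ℕ} (φ : Language.order.BoundedFormula Empty n) :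
    symbolCodes (n := 0) φ.alls =
      List.replicate n (Encodable.encode (Sum.inr (Sum.inr 1) : Symbol)) ++ symbolCodes φ := by
  induction n with
  | zero => rfl
  | succ n ih =>
    rw [BoundedFormula.alls, ih, symbolCodes_all, List.replicate_succ', List.append_assoc,
      List.singleton_append]

theorem primrec_encode_var {N : ℕ → ℕ} (hN : Primrec N) {i : ∀ j, Fin (N j)}
    (hi : Primrec fun j => (i j : ℕ)) :
    Primrec fun j => Encodable.encode (Sum.inl ⟨N j, Term.var (Sum.inr (i j))⟩ : Symbol) :=
  show Primrec fun j => 2 * Nat.pair (N j) (Encodable.encode [2 * (2 * (i j : ℕ) + 1)]) from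
    Primrec.nat_double.comp (Primrec₂.natPair.comp hN (Primrec.encode.comp
      (Primrec.list_cons.comp (Primrec.nat_double.comp (Primrec.nat_double_succ.comp hi))
        (.const []))))

theorem primrec_encode_nat {N : ℕ → ℕ} (hN : Primrec N) :
    Primrec fun j => Encodable.encode (Sum.inr (Sum.inr (N j)) : Symbol) :=
  Primrec.nat_double_succ.comp (Primrec.nat_double_succ.comp hN)

section Relabel

variable {α : Type} {N : ℕ → ℕ} (hN : Primrec N) {g : ∀ j, α → Fin (N j)}
  (hg : ∀ a, Primrec fun j => (g j a : ℕ))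
include hN hg

theorem primrec_encode_relabel {k : ℕ} (t : Language.order.Term (α ⊕ Fin k)) :
    Primrec fun j => Encodable.encode (Sum.inl ⟨N j + k,
      t.relabel (BoundedFormula.relabelAux (fun a => Sum.inr (g j a)) k)⟩ : Symbol) := by
  have hNk : Primrec fun j => N j + k := Primrec.nat_add.comp hN (.const k)
  rcases t with (a | i) | ⟨f, -⟩
  · exact primrec_encode_var hNk (i := fun j => (g j a).castAdd k) (hg a)
  · exact primrec_encode_var hNk (i := fun j => i.natAdd (N j))
      (Primrec.nat_add.comp hN (.const (i : ℕ)))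
  · exact isEmptyElim f

theorem primrec_symbolCodes_relabel {k : ℕ} (φ : Language.order.BoundedFormula α k) :
    Primrec fun j => symbolCodes (φ.relabel fun a => Sum.inr (g j a)) := by
  have ht {k : ℕ} (t : Language.order.Term (α ⊕ Fin k)) := primrec_encode_relabel hN hg t
  have hNk (k : ℕ) : Primrec fun j => N j + k := Primrec.nat_add.comp hN (.const k)
  induction φ with
  | @falsum k =>
    exact Primrec.list_cons.comp (primrec_encode_nat (hNk (k + 2))) (.const [])
  | equal t u =>
    exact Primrec.list_cons.comp (ht t) (Primrec.list_cons.comp (ht u) (.const []))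
  | @rel k l R ts =>
    refine (Primrec.list_cons.comp
      (.const (Encodable.encode (Sum.inr (Sum.inl ⟨l, R⟩) : Symbol)))
      (Primrec.list_cons.comp (primrec_encode_nat (hNk k))
        (Primrec.list_ofFn fun i => ht (ts i)))).of_eq fun j => ?_
    rw [symbolCodes, BoundedFormula.relabel, BoundedFormula.mapTermRel,
      BoundedFormula.listEncode, List.map_append, List.map_map, ← List.ofFn_eq_map]
    rfl
  | imp φ ψ hφ hψ =>
    simp only [BoundedFormula.relabel_imp, symbolCodes_imp]
    exact Primrec.list_cons.comp (.const _) (Primrec.list_append.comp hφ hψ)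
  | all φ hφ =>
    simp only [BoundedFormula.relabel_all, symbolCodes_all]
    exact Primrec.list_cons.comp (.const _) hφ

end Relabel

section Reduction

variable {p m : ℕ}

/-- At level `j`, a formula has `p` parameters, followed by `j` variables that it ignores and `m`
further variables. -/
def levelIndex (j : ℕ) : Fin p ⊕ Fin m → Fin (p + j + m) :=
  Sum.elim (fun i => (i.castAdd j).castAdd m) (Fin.natAdd (p + j))

/-- A formula in `p` parameters and `m` variables, moved to level `j`. -/
def atLevel (φ : Language.order.Formula (Fin p ⊕ Fin m)) (j : ℕ) :
    Language.order.BoundedFormula Empty (p + j + m) :=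
  BoundedFormula.relabel (fun i => Sum.inr (levelIndex j i)) φ

theorem primrec_symbolCodes_atLevel (φ : Language.order.Formula (Fin p ⊕ Fin m)) :
    Primrec fun j => symbolCodes (atLevel φ j) := by
  have hp : Primrec fun j => p + j := Primrec.nat_add.comp (.const p) .id
  refine primrec_symbolCodes_relabel (N := fun j => p + j + m)
    (Primrec.nat_add.comp hp (.const m)) ?_ φ
  rintro (i | i)
  · exact .const (i : ℕ)
  · exact Primrec.nat_add.comp hp (.const (i : ℕ))

theorem realize_atLevel {F : Type v} [Language.order.Structure F] {j : ℕ}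
    {φ : Language.order.Formula (Fin p ⊕ Fin m)} {e : Empty → F} {y : Fin p → F} {u : Fin j → F}
    {x : Fin m → F} :
    (atLevel φ j).Realize e (Fin.append (Fin.append y u) x) ↔ φ.Realize (Sum.elim y x) := by
  refine BoundedFormula.realize_relabel.trans (iff_of_eq (congrArg₂ _ ?_ (Subsingleton.elim _ _)))
  funext i
  rcases i with i | i <;> simp [levelIndex]

variable (A : Language.order.Formula (Fin p ⊕ Fin 1))
  (S : Language.order.Formula (Fin p ⊕ Fin 2)) (E : Language.order.Formula (Fin p ⊕ Fin 1))

/-- The formula stating that every chain of `n` steps `S` that starts at the last variable ends at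
an element satisfying `E`. -/
def chain : ℕ → ∀ j : ℕ, Language.order.BoundedFormula Empty (p + j + 1)
  | 0, j => atLevel E j
  | n + 1, j => BoundedFormula.all (n := p + j + 1) ((atLevel S j).imp (chain n (j + 1)))

theorem symbolCodes_chain (n j : ℕ) :
    symbolCodes (chain S E n j) = (List.range n).flatMap (fun i =>
      Encodable.encode (Sum.inr (Sum.inr 1) : Symbol) ::
        Encodable.encode (Sum.inr (Sum.inr 0) : Symbol) :: symbolCodes (atLevel S (j + i))) ++
      symbolCodes (atLevel E (j + n)) := by
  induction n generalizing j with
  | zero => rfl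
  | succ n ih =>
    have hlevel {m : ℕ} (φ : Language.order.Formula (Fin p ⊕ Fin m)) (i : ℕ) :
        symbolCodes (atLevel φ (j + 1 + i)) = symbolCodes (atLevel φ (j + (i + 1))) :=
      congrArg (fun l => symbolCodes (atLevel φ l)) (Nat.succ_add_eq_add_succ j i)
    rw [chain, symbolCodes_all, symbolCodes_imp, ih, List.range_succ_eq_map]
    simp only [List.flatMap_cons, List.flatMap_map, Nat.add_zero, List.cons_append,
      List.append_assoc, Nat.succ_eq_add_one, hlevel]

theorem primrec_symbolCodes_chain : Primrec fun n => symbolCodes (chain S E n 0) := by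
  have hS : Primrec₂ fun _ i : ℕ => Encodable.encode (Sum.inr (Sum.inr 1) : Symbol) ::
      Encodable.encode (Sum.inr (Sum.inr 0) : Symbol) :: symbolCodes (atLevel S (0 + i)) :=
    Primrec.list_cons.comp (.const _) (Primrec.list_cons.comp (.const _)
      ((primrec_symbolCodes_atLevel S).comp (Primrec.nat_add.comp (.const 0) .snd)))
  have hE : Primrec fun n => symbolCodes (atLevel E (0 + n)) :=
    (primrec_symbolCodes_atLevel E).comp (Primrec.nat_add.comp (.const 0) .id)
  exact (Primrec.list_append.comp (Primrec.list_flatMap Primrec.list_range hS) hE).of_eq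
    fun n => (symbolCodes_chain S E n 0).symm

/-- The sentence stating, for all parameters and every element satisfying `A`, that each chain of
`n` steps `S` from this element ends at an element satisfying `E`. -/
def reduction (n : ℕ) : Language.order.Sentence :=
  ((atLevel A 0).imp (chain S E n 0)).alls

theorem computable_encode_reduction :
    Computable fun n => Encodable.encode (reduction A S E n) := by
  have hcodes : Primrec fun n => symbolCodes (n := 0) (reduction A S E n) := by
    simp only [reduction, symbolCodes_alls, symbolCodes_imp]
    exact Primrec.list_append.comp (.const _) (Primrec.list_cons.comp (.const _)
      (Primrec.list_append.comp (.const _) (primrec_symbolCodes_chain S E)))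
  exact ((Primrec.encode.comp hcodes).of_eq fun n => (encode_sentence _).symm).to_comp

variable {A S E} {F : Type v} [Language.order.Structure F]

theorem realize_chain {y : Fin p → F} {Q : ℕ → F → Prop}
    (hE : ∀ a, E.Realize (Sum.elim y ![a]) ↔ Q 0 a)
    (hS : ∀ n a, (∀ b, S.Realize (Sum.elim y ![a, b]) → Q n b) ↔ Q (n + 1) a) {n j : ℕ}
    {e : Empty → F} {u : Fin j → F} {a : F} :
    (chain S E n j).Realize e (Fin.append (Fin.append y u) ![a]) ↔ Q n a := by
  induction n generalizing j a with
  | zero => exact realize_atLevel.trans (hE a)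
  | succ n ih =>
    refine BoundedFormula.realize_all.trans ((forall_congr' fun b => ?_).trans (hS n a))
    refine BoundedFormula.realize_imp.trans (imp_congr ?_ ?_)
    · have : ![a, b] = Fin.snoc ![a] b := by
        ext i
        fin_cases i <;> rfl
      rw [← realize_atLevel, this, Fin.append_snoc]
    · rw [← ih (u := Fin.snoc u a), Fin.append_snoc, Fin.append_right_eq_snoc,
        Fin.append_right_eq_snoc]
      rfl

theorem realize_reduction {Q : (Fin p → F) → ℕ → F → Prop}
    (hE : ∀ y a, E.Realize (Sum.elim y ![a]) ↔ Q y 0 a)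
    (hS : ∀ y n a, (∀ b, S.Realize (Sum.elim y ![a, b]) → Q y n b) ↔ Q y (n + 1) a) {n : ℕ} :
    F ⊨ reduction A S E n ↔ ∀ y a, A.Realize (Sum.elim y ![a]) → Q y n a := by
  have hsplit (x : Fin (p + 1) → F) :
      Fin.append (Fin.append (Fin.init x) Fin.elim0) ![x (Fin.last p)] = x := by
    rw [Fin.append_right_eq_snoc, Fin.append_elim0]
    exact Fin.snoc_init_self x
  have himp (y a) : BoundedFormula.Realize ((atLevel A 0).imp (chain S E n 0)) default
      (Fin.append (Fin.append y Fin.elim0) ![a]) ↔ (A.Realize (Sum.elim y ![a]) → Q y n a) :=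
    BoundedFormula.realize_imp.trans (imp_congr realize_atLevel (realize_chain (hE y) (hS y)))
  refine BoundedFormula.realize_alls.trans ⟨fun h y a => (himp y a).1 (h _), fun h x => ?_⟩
  rw [← hsplit x]
  exact (himp _ _).2 (h _ _)

end Reduction

/-! ### Undecidability -/

theorem exists_computable_realize_iff {P : ∀ (F : Type v) [Lattice F], Coding F → F → Prop}
    (hP : ∀ {β : Type} (c : Coding β) (x : β),
      UniformlyDefinable fun F _ e => P F (c.map e) (e x)) :
    ∃ φ : ℕ → Language.order.Sentence, (Computable fun n => Encodable.encode (φ n)) ∧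
      ∀ n (F : Type v) [Lattice F],
        F ⊨ φ n ↔ ∀ (c : Coding F) a, P F c a → ¬ c.Represents n a := by
  let vars : Coding (Fin 3) := ⟨0, 1, 2⟩
  obtain ⟨A, hA⟩ := hP (vars.map (Sum.inl (β := Fin 1))) (.inr 0)
  obtain ⟨S, hS⟩ := UniformlyDefinable.isSucc.{v} (vars.map (Sum.inl (β := Fin 2)))
    (.inr 1) (.inr 0)
  obtain ⟨E, hE⟩ := (UniformlyDefinable.eq.{v} (.inr 0 : Fin 3 ⊕ Fin 1) (.inl vars.zero)).not
  refine ⟨reduction A S E, computable_encode_reduction A S E, fun n F _ => ?_⟩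
  have hrealize : F ⊨ reduction A S E n ↔
      ∀ (y : Fin 3 → F) a, A.Realize (Sum.elim y ![a]) → ¬ (vars.map y).Represents n a := by
    refine realize_reduction (Q := fun y n a => ¬ (vars.map y).Represents n a)
      (fun y a => hE F _) fun y n a => ?_
    rw [Coding.Represents, not_exists]
    exact forall_congr' fun b => (imp_congr_left (hS F _)).trans not_and.symm
  rw [hrealize]
  exact ⟨fun h c a ha => h ![c.lt, c.link, c.zero] a ((hA F _).2 ha),
    fun h y a ha => h (vars.map y) a ((hA F _).1 ha)⟩

section Undecidability

variable {K : ∀ (F : Type v) [Lattice F], Prop}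
  (hfinite : ∀ (F : Type v) [Lattice F], K F → Finite {a : F // DoublyPrime a})
  (hstandard : ∀ N, ∃ (F : Type v) (_ : Lattice F) (c : Coding F) (g : ℕ → F),
    K F ∧ c.IsStandard N g)
include hfinite hstandard

theorem exists_computable_theory_iff_not_dom {f : ℕ →. ℕ} (hf : Partrec f) :
    ∃ φ : ℕ → Language.order.Sentence, (Computable fun n => Encodable.encode (φ n)) ∧
      ∀ n, (∀ (F : Type v) [Lattice F], K F → F ⊨ φ n) ↔ ¬ (f n).Dom := by
  obtain ⟨R, hR⟩ := expressible_of_partrec'.{v} (Nat.Partrec'.part_iff₁.2 hf)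
  obtain ⟨φ, hφ, hrealize⟩ := exists_computable_realize_iff.{v}
    (P := fun F _ c a => IsStrictOrder F c.Lt ∧ ∃ z, R F c (fun _ => a) z) fun c x =>
      .and (.isStrictOrder c) (.ex (hR.definable (c.map Sum.inl) (fun _ => .inl x) (.inr ())))
  refine ⟨φ, hφ, fun n => ⟨fun h hn => ?_, fun hn F _ hF => ?_⟩⟩
  · obtain ⟨N, hN, hnN⟩ := ((hR.complete (n := n ::ᵥ .nil) (Part.get_mem hn)).and
      (eventually_ge_atTop n)).exists
    obtain ⟨F, _, c, g, hF, hg⟩ := hstandard N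
    have hget : g ∘ (n ::ᵥ List.Vector.nil).get = fun _ => g n :=
      funext fun i => by simp [Subsingleton.elim i 0]
    exact (hrealize n F).1 (h F hF) c (g n) ⟨hg.isStrictOrder, _, hget ▸ hN F c g hg⟩
      (hg.represents hnN)
  · refine (hrealize n F).2 fun c a ⟨_, z, hz⟩ hna => hn ?_
    have := hfinite F hF
    obtain ⟨m, hm, -⟩ := hR.sound (n := n ::ᵥ .nil) (fun i => by simpa using hna) hz
    exact Part.dom_iff_mem.2 ⟨m, hm⟩

theorem theory_undecidable_of_exists_isStandard :
    ¬ ∃ f : ℕ → Bool, Computable f ∧ ∀ φ : Language.order.Sentence,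
      f (Encodable.encode φ) = true ↔ ∀ (F : Type v) [Lattice F], K F → F ⊨ φ := by
  rintro ⟨f, hf, hfφ⟩
  have heval : Partrec fun n => Nat.Partrec.Code.eval (Denumerable.ofNat Nat.Partrec.Code n) 0 :=
    Nat.Partrec.Code.eval_part.comp (Computable.ofNat _) (Computable.const 0)
  obtain ⟨φ, hφ, h⟩ := exists_computable_theory_iff_not_dom hfinite hstandard heval
  refine ComputablePred.halting_problem 0 (ComputablePred.computable_iff.2
    ⟨fun c => !f (Encodable.encode (φ (Encodable.encode c))),
      Primrec.not.to_comp.comp (hf.comp (hφ.comp Computable.encode)), funext fun c => ?_⟩)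
  have hhalt := (hfφ (φ (Encodable.encode c))).trans (h _)
  rw [Denumerable.ofNat_encode] at hhalt
  rw [Bool.not_eq_true', ← Bool.not_eq_true, hhalt, not_not]

end Undecidability

end FreeLatticeTheory

/-- **Theorem (Statement 1).** The common first-order theory of finitely generated free
lattices is undecidable: there is no computable function deciding, via the Gödel
encoding, whether a sentence in the language of posets is true in the free lattice on
`X` for every finite nonempty set `X`. -/
theorem theory_of_finitely_generated_free_lattices_undecidable :
    ¬ ∃ f : ℕ → Bool, Computable f ∧
      ∀ φ : Language.order.Sentence,
        f (Encodable.encode φ) = true ↔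
          ∀ (X : Type u) (F : Type v) [Lattice F] (ι : X → F),
            Finite X → Nonempty X → IsFreeLatticeOn.{u, v, w} ι → F ⊨ φ := by
  rintro ⟨f, hf, hfφ⟩
  refine FreeLatticeTheory.theory_undecidable_of_exists_isStandard.{v}
    (K := fun F _ => ∃ (X : Type u) (ι : X → F),
      Finite X ∧ Nonempty X ∧ IsFreeLatticeOn.{u, v, w} ι) ?_ ?_ ⟨f, hf, fun φ => ?_⟩
  · rintro F _ ⟨X, ι, _, -, hι⟩
    exact (FreeLatticeTheory.finite_supPrime hι).subset fun a ha => ha.1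
  · intro N
    obtain ⟨c, g, hg⟩ := FreeLatticeTheory.FreeLattice.exists_isStandard.{v} N
    exact ⟨_, _, c, g, ⟨_, _, inferInstance, inferInstance,
      FreeLatticeTheory.FreeLattice.isFreeLatticeOn Equiv.ulift.{u}⟩, hg⟩
  · exact (hfφ φ).trans ⟨fun h F _ ⟨X, ι, hX, hX', hι⟩ => h X F ι hX hX' hι,
      fun h X F _ ι hX hX' hι => h F ⟨X, ι, hX, hX', hι⟩⟩
end
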